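/- arXiv:2605.26188 — 7 statements merged into one kernel-verified Lean document; each statement's English description precedes it below -/
import Mathlib

section
/- There exist real numbers α and β such that limsup_{Q→∞} Q · ( min_{x ∈ ℤ, 1 ≤ x < Q} ‖αx‖ · ‖βx‖ ) ≥ 2/(3+√5), where ‖t‖ denotes the distance from the real number t to the nearest integer. -/
/-- The distance from a real number to the nearest integer. -/
noncomputable def distNearestInt (t : ℝ) : ℝ := |t - round t|

/-!
The bound holds for a Baire-generic pair `(α, β)`. Write `F` for the Fibonacci sequence and put
`Q = F (N + 2)`. The lattice of integer points `(X, Y)` with `Q ∣ X * F (N + 1) + Y` satisfies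
`|X * Y| ≥ F N` whenever `0 < |X| < F (N + 1)`: expand `(X, Y)` in the lattice basis whose first
coordinates are the consecutive Fibonacci numbers enclosing `|X|`. So if `(a, b)` lies in this
lattice and `a` is prime to `Q`, then `Q * ‖x a / Q‖ * ‖x b / Q‖ ≥ F N / Q` for `1 ≤ x < Q`, and
`F N / F (N + 2) → φ⁻² = 2 / (3 + √5)`.

Such points `(a / Q, b / Q)` are dense. Given a target `(c / d, c' / d) ≠ 0`, periodicity of `F`
modulo `d * (c ^ 2 + c' ^ 2)` provides arbitrarily large even `k` with `F k ≡ 0` and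
`F (k + 1) ≡ 1`. For `Q = F (2 * k + 1) = F (k + 1) ^ 2 + F k ^ 2 ≡ 1`, subtracting from
`(c * Q, c' * Q)` the lattice vector `(c * F (k + 1) + c' * F k, c' * F (k + 1) - c * F k)`, which
is small compared to `Q`, gives a multiple of `d`; dividing by `d` gives `(a, b)`. Here `a` is prime
to `Q` because `c ^ 2 + c' ^ 2` is.
-/

open Filter Topology

theorem eventually_residual_le_limsup {X α : Type*} [TopologicalSpace X]
    [ConditionallyCompleteLinearOrder α] [TopologicalSpace α] [OrderTopology α] [DenselyOrdered α]
    [NoMinOrder α] [FirstCountableTopology α] {f : X → ℕ → α} {L : α}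
    (hf : ∀ n, LowerSemicontinuous (f · n)) (hbdd : ∀ x, IsBoundedUnder (· ≤ ·) atTop (f x))
    (hdense : ∀ c < L, ∀ N, Dense {x | ∃ n ≥ N, c < f x n}) :
    ∀ᶠ x in residual X, L ≤ limsup (f x) atTop := by
  obtain ⟨u, -, hu_lt, hu⟩ := exists_seq_strictMono_tendsto L
  have h_generic : ∀ᶠ x in residual X, ∀ j N, ∃ n ≥ N, u j < f x n := by
    simp only [eventually_countable_forall]
    intro j N
    refine residual_of_dense_open ?_ (hdense _ (hu_lt j) N)
    simp only [Set.ofPred_exists, ← exists_prop]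
    exact isOpen_iUnion fun n ↦ isOpen_iUnion fun _ ↦ (hf n).isOpen_preimage (u j)
  filter_upwards [h_generic] with x hx
  refine le_of_tendsto' hu fun j ↦ le_limsup_of_frequently_le ?_ (hbdd x)
  exact frequently_atTop.2 fun N ↦ (hx j N).imp fun n hn ↦ ⟨hn.1, hn.2.le⟩

section Fibonacci

open Nat (fib)

theorem fib_add_add_one_le_fib_mul_fib (k m : ℕ) :
    fib (k + m + 1) ≤ fib (k + 1) * fib (m + 2) := by
  rw [Nat.fib_add, Nat.fib_add_two, mul_add]
  gcongr
  exact Nat.le_succ k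

theorem tendsto_fib_atTop : Tendsto fib atTop atTop :=
  (tendsto_add_atTop_iff_nat 2).1 Nat.fib_add_two_strictMono.tendsto_atTop

theorem tendsto_fib_div_fib_add_two_atTop :
    Tendsto (fun n ↦ (fib n / fib (n + 2) : ℝ)) atTop (𝓝 (2 / (3 + √5))) := by
  have h_succ := (tendsto_add_atTop_iff_nat 1).2 tendsto_fib_div_fib_succ_atTop
  have h_limit : -Real.goldenConj * -Real.goldenConj = 2 / (3 + √5) := by
    rw [eq_div_iff (by positivity), Real.goldenConj]
    linear_combination ((1 + √5) / 4 : ℝ) * Real.sq_sqrt (show (0 : ℝ) ≤ 5 by norm_num)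
  rw [← h_limit]
  refine (tendsto_fib_div_fib_succ_atTop.mul h_succ).congr fun n ↦ ?_
  exact div_mul_div_cancel₀ (Nat.cast_ne_zero.2 (Nat.fib_pos.2 n.succ_pos).ne')

theorem exists_pos_natCast_fib_eq_zero_and_one (R : Type*) [AddCommGroupWithOne R] [Finite R] :
    ∃ p > 0, ∀ i, (fib (p * i) : R) = 0 ∧ (fib (p * i + 1) : R) = 1 := by
  let shift : Equiv.Perm (R × R) :=
    ⟨fun v ↦ (v.2, v.1 + v.2), fun v ↦ (v.2 - v.1, v.1), fun v ↦ by simp, fun v ↦ by simp⟩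
  have shift_pow (k : ℕ) : (shift ^ k) (0, 1) = ((fib k : R), (fib (k + 1) : R)) := by
    induction k with
    | zero => simp
    | succ k ih => rw [pow_succ', Equiv.Perm.mul_apply, ih, Nat.fib_add_two]; simp [shift]
  refine ⟨orderOf shift, orderOf_pos shift, fun i ↦ Prod.mk.inj ?_⟩
  rw [← shift_pow, pow_mul, pow_orderOf_eq_one, one_pow, Equiv.Perm.one_apply]

theorem frequently_even_and_dvd_fib_and_dvd_fib_succ_sub_one {D : ℤ} (hD : D ≠ 0) :
    ∃ᶠ k in atTop, Even k ∧ D ∣ fib k ∧ D ∣ fib (k + 1) - 1 := by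
  have : NeZero D.natAbs := ⟨Int.natAbs_ne_zero.2 hD⟩
  obtain ⟨p, hp, h⟩ := exists_pos_natCast_fib_eq_zero_and_one (ZMod D.natAbs)
  refine frequently_atTop.2 fun N ↦ ⟨p * (2 * N), by nlinarith, by simp, ?_⟩
  obtain ⟨h_zero, h_one⟩ := h (2 * N)
  rw [← Int.natAbs_dvd, ← Int.natAbs_dvd (b := _ - 1), ← ZMod.intCast_zmod_eq_zero_iff_dvd,
    ← ZMod.intCast_zmod_eq_zero_iff_dvd]
  push_cast
  exact ⟨h_zero, sub_eq_zero.2 h_one⟩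

theorem fib_dvd_mul_fib_add_iff (k m : ℕ) (X Y : ℤ) :
    (fib (k + m + 1) : ℤ) ∣ X * fib (k + m) + Y ↔
      ∃ a b : ℤ, X = a * fib k + b * fib (k + 1) ∧
        Y = (-1) ^ k * (a * fib (m + 1) - b * fib m) := by
  induction k generalizing m with
  | zero =>
    simp only [zero_add, Nat.fib_zero, Nat.fib_one, Nat.cast_zero, Nat.cast_one, mul_zero, mul_one,
      pow_zero, one_mul]
    constructor
    · rintro ⟨z, hz⟩
      exact ⟨z, X, rfl, by linear_combination hz⟩
    · rintro ⟨a, b, rfl, rfl⟩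
      exact ⟨a, by ring⟩
  | succ k ih =>
    rw [Nat.add_right_comm k 1 m, Nat.add_assoc k m 1, ih (m + 1)]
    simp only [Nat.fib_add_two, Nat.cast_add]
    constructor
    · rintro ⟨a, b, rfl, rfl⟩
      exact ⟨b - a, a, by ring, by ring⟩
    · rintro ⟨a, b, rfl, rfl⟩
      exact ⟨b, a + b, by ring, by ring⟩

theorem le_abs_mul_sub_mul {P P' R R' a b : ℤ} (hP : 0 ≤ P) (hR : 0 ≤ R) (hR' : 0 ≤ R')
    (h_pos : 0 < a * P + b * P') (h_lt : a * P + b * P' < P') : R' ≤ |a * R' - b * R| := by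
  have hP' : 0 < P' := h_pos.trans h_lt
  -- `a ≠ 0`, and `b` vanishes or has the opposite sign, so `a * R'` and `b * R` cannot cancel.
  rcases lt_trichotomy a 0 with ha | rfl | ha
  · have hb : 0 ≤ b := by by_contra! hb; nlinarith
    exact le_abs.2 (.inr (by nlinarith))
  · have hb : 0 < b := by by_contra! hb; nlinarith
    nlinarith
  · have hb : b ≤ 0 := by by_contra! hb; nlinarith
    exact le_abs.2 (.inl (by nlinarith))

theorem fib_le_abs_mul_abs {N : ℕ} {X Y : ℤ} (h_dvd : (fib (N + 2) : ℤ) ∣ X * fib (N + 1) + Y)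
    (hX : X ≠ 0) (hX_lt : |X| < fib (N + 1)) : (fib N : ℤ) ≤ |X| * |Y| := by
  wlog hX_pos : 0 < X generalizing X Y
  · simpa only [abs_neg] using this (X := -X) (Y := -Y)
      (by simpa only [neg_mul, ← neg_add, dvd_neg] using h_dvd) (neg_ne_zero.2 hX)
      (by rwa [abs_neg]) (by lia)
  rw [abs_of_pos hX_pos] at hX_lt ⊢
  lift X to ℕ using hX_pos.le
  norm_cast at hX_pos hX_lt
  obtain ⟨l, hl⟩ : ∃ l, X.greatestFib = l + 2 :=
    Nat.exists_eq_add_of_le' (Nat.le_greatestFib.2 hX_pos)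
  have h_le : fib (l + 2) ≤ X := hl ▸ Nat.fib_greatestFib_le X
  have h_lt : X < fib (l + 3) := by simpa only [hl] using Nat.lt_fib_greatestFib_add_one X
  obtain ⟨m, rfl⟩ : ∃ m, N = l + m + 2 := by
    have : l + 2 < N + 1 := Nat.fib_mono.reflect_lt (h_le.trans_lt hX_lt)
    exact ⟨N - (l + 2), by lia⟩
  rw [show l + m + 2 + 2 = l + 2 + (m + 1) + 1 by lia,
    show l + m + 2 + 1 = l + 2 + (m + 1) by lia] at h_dvd
  obtain ⟨a, b, hX_eq, rfl⟩ := (fib_dvd_mul_fib_add_iff _ _ _ _).1 h_dvd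
  have hY : (fib (m + 2) : ℤ) ≤ |(-1) ^ (l + 2) * (a * fib (m + 2) - b * fib (m + 1))| := by
    rw [abs_mul, abs_neg_one_pow, one_mul]
    refine le_abs_mul_sub_mul (P := fib (l + 2)) (P' := fib (l + 3)) (by positivity)
      (by positivity) (by positivity) ?_ ?_ <;> rw [← hX_eq] <;> assumption_mod_cast
  calc (fib (l + m + 2) : ℤ) ≤ fib (l + 2) * fib (m + 2) := by
        have := fib_add_add_one_le_fib_mul_fib (l + 1) m
        rw [show l + 1 + m + 1 = l + m + 2 by lia] at this
        exact_mod_cast this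
    _ ≤ X * _ := by gcongr

theorem isCoprime_mul_add_mul_sq_add_sq {R : Type*} [CommRing R] {A B x y : R}
    (hAB : IsCoprime (A ^ 2 + B ^ 2) (x ^ 2 + y ^ 2)) (hxy : IsCoprime x y) :
    IsCoprime (A * x + B * y) (x ^ 2 + y ^ 2) := by
  obtain ⟨u, v, huv⟩ := hAB
  obtain ⟨s, t, hst⟩ := hxy.pow (m := 2) (n := 2)
  refine ⟨u * (s - t) * (A * x - B * y), u * (s * B ^ 2 + t * A ^ 2) + v, ?_⟩
  linear_combination huv + u * (A ^ 2 + B ^ 2) * hst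

theorem exists_fib_dvd_mul_fib_add_of_dvd {c c' d : ℤ} {k : ℕ} (hk : Even k)
    (h_fib : d * (c ^ 2 + c' ^ 2) ∣ fib k) (h_fib_succ : d * (c ^ 2 + c' ^ 2) ∣ fib (k + 1) - 1) :
    ∃ a b : ℤ, (fib (2 * k + 1) : ℤ) ∣ a * fib (2 * k) + b ∧ IsCoprime a (fib (2 * k + 1)) ∧
      d * a = c * fib (2 * k + 1) - (c * fib (k + 1) + c' * fib k) ∧
      d * b = c' * fib (2 * k + 1) - (c' * fib (k + 1) - c * fib k) := by
  have h_dvd := (fib_dvd_mul_fib_add_iff k k _ _).2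
    ⟨c', c, add_comm (c * fib (k + 1) : ℤ) (c' * fib k), rfl⟩
  rw [hk.neg_one_pow, one_mul, ← two_mul] at h_dvd
  have h_sq : (fib (2 * k + 1) : ℤ) = fib (k + 1) ^ 2 + fib k ^ 2 := by
    exact_mod_cast Nat.fib_two_mul_add_one k
  have h_consecutive : IsCoprime (fib (k + 1) : ℤ) (fib k) :=
    Nat.isCoprime_iff_coprime.2 (Nat.fib_coprime_fib_succ k).symm
  obtain ⟨z, hz⟩ := h_fib
  obtain ⟨w, hw⟩ := h_fib_succ
  obtain ⟨e, he⟩ : d * (c ^ 2 + c' ^ 2) ∣ fib (2 * k + 1) - 1 :=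
    ⟨w * (fib (k + 1) + 1) + z * fib k, by
      linear_combination h_sq + (fib (k + 1) + 1) * hw + fib k * hz⟩
  have h_coprime : IsCoprime (d * (c ^ 2 + c' ^ 2)) (fib (2 * k + 1) : ℤ) :=
    ⟨-e, 1, by linear_combination he⟩
  let a := (c ^ 2 + c' ^ 2) * (c * e - c * w - c' * z)
  let b := (c ^ 2 + c' ^ 2) * (c' * e - c' * w + c * z)
  have ha : d * a = c * fib (2 * k + 1) - (c * fib (k + 1) + c' * fib k) := by
    linear_combination c * (hw - he) + c' * hz
  have hb : d * b = c' * fib (2 * k + 1) - (c' * fib (k + 1) - c * fib k) := by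
    linear_combination c' * (hw - he) - c * hz
  refine ⟨a, b, ?_, ?_, ha, hb⟩
  · refine h_coprime.of_mul_left_left.symm.dvd_of_dvd_mul_left (y := d) ?_
    rw [show d * (a * fib (2 * k) + b) = fib (2 * k + 1) * (c * fib (2 * k) + c') -
        ((c * fib (k + 1) + c' * fib k) * fib (2 * k) + (c' * fib (k + 1) - c * fib k)) by
      linear_combination fib (2 * k) * ha + hb]
    exact dvd_sub (dvd_mul_right _ _) h_dvd
  · refine IsCoprime.of_mul_left_right (x := d) ?_
    rw [ha, sub_eq_neg_add, IsCoprime.add_mul_right_left_iff, IsCoprime.neg_left_iff, h_sq]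
    exact isCoprime_mul_add_mul_sq_add_sq (h_sq ▸ h_coprime.of_mul_left_right) h_consecutive

theorem abs_div_fib_sub_div_le {c d A B a : ℤ} {k : ℕ} (hd : d ≠ 0)
    (ha : d * a = c * fib (2 * k + 1) - (A * fib (k + 1) + B * fib k)) :
    |(a / fib (2 * k + 1) - c / d : ℝ)| ≤ (|A| + |B|) / fib (k + 1) := by
  have h_pos : (0 : ℝ) < fib (k + 1) := mod_cast Nat.fib_pos.2 k.succ_pos
  have h_q : (fib (k + 1) ^ 2 : ℝ) ≤ fib (2 * k + 1) := by
    exact_mod_cast Nat.fib_two_mul_add_one k ▸ Nat.le_add_right _ _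
  have hq_pos : (0 : ℝ) < fib (2 * k + 1) := (by positivity : (0 : ℝ) < _).trans_le h_q
  have hd' : (d : ℝ) ≠ 0 := mod_cast hd
  have hd_one : (1 : ℝ) ≤ |(d : ℝ)| := mod_cast Int.one_le_abs hd
  have ha' : (d * a : ℝ) = c * fib (2 * k + 1) - (A * fib (k + 1) + B * fib k) := mod_cast ha
  calc |(a / fib (2 * k + 1) - c / d : ℝ)|
      = |(A * fib (k + 1) + B * fib k : ℝ)| / (|(d : ℝ)| * fib (2 * k + 1)) := by
        rw [div_sub_div _ _ hq_pos.ne' hd', abs_div, abs_mul, Nat.abs_cast, ← abs_neg,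
          mul_comm |(d : ℝ)|]
        congr 2
        linear_combination -ha'
    _ ≤ (|A| * fib (k + 1) + |B| * fib (k + 1)) / (1 * fib (k + 1) ^ 2) := by
        gcongr
        refine (abs_add_le _ _).trans ?_
        rw [abs_mul, abs_mul, Nat.abs_cast, Nat.abs_cast, Int.cast_abs, Int.cast_abs]
        gcongr
        exact Nat.le_succ k
    _ = (|A| + |B|) / fib (k + 1) := by field_simp

theorem frequently_exists_fib_dvd_mul_fib_add_near {r s : ℚ} (h : (r, s) ≠ 0) {ε : ℝ}
    (hε : 0 < ε) :
    ∃ᶠ n in atTop, ∃ a b : ℤ, (fib (n + 1) : ℤ) ∣ a * fib n + b ∧ IsCoprime a (fib (n + 1)) ∧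
      |(a / fib (n + 1) - r : ℝ)| < ε ∧ |(b / fib (n + 1) - s : ℝ)| < ε := by
  let d : ℤ := r.den * s.den
  let c : ℤ := r.num * s.den
  let c' : ℤ := s.num * r.den
  have hd : d ≠ 0 := by positivity
  have hr : (r : ℝ) = c / d := by
    push_cast [c, d]
    rw [mul_div_mul_right _ _ (by positivity), Rat.cast_def]
  have hs : (s : ℝ) = c' / d := by
    push_cast [c', d]
    rw [mul_comm (r.den : ℝ), mul_div_mul_right _ _ (by positivity), Rat.cast_def]
  have hc : c ^ 2 + c' ^ 2 ≠ 0 := by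
    contrapose! h
    obtain ⟨hc, hc'⟩ := (add_eq_zero_iff_of_nonneg (sq_nonneg c) (sq_nonneg c')).1 h
    exact Prod.ext (by simpa [c] using hc) (by simpa [c'] using hc')
  have h_small : ∀ᶠ k in atTop, ((|c| + |c'| : ℝ) / fib (k + 1)) < ε :=
    ((tendsto_natCast_atTop_atTop.comp (tendsto_fib_atTop.comp (tendsto_add_atTop_nat 1))
      ).const_div_atTop _).eventually_lt_const hε
  refine (tendsto_id.const_mul_atTop' two_pos).frequently
    (((frequently_even_and_dvd_fib_and_dvd_fib_succ_sub_one
      (mul_ne_zero hd hc)).and_eventually h_small).mono ?_)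
  rintro k ⟨⟨hk, h_fib, h_fib_succ⟩, h_lt⟩
  obtain ⟨a, b, h_dvd, h_coprime, ha, hb⟩ :=
    exists_fib_dvd_mul_fib_add_of_dvd hk h_fib h_fib_succ
  refine ⟨a, b, h_dvd, h_coprime, ?_, ?_⟩
  · rw [hr]
    exact (abs_div_fib_sub_div_le hd ha).trans_lt h_lt
  · rw [sub_eq_add_neg (c' * _ : ℤ) (c * _), ← neg_mul] at hb
    rw [hs]
    refine (abs_div_fib_sub_div_le hd hb).trans_lt ?_
    rwa [abs_neg, add_comm]

end Fibonacci

section DistNearestInt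

theorem distNearestInt_nonneg (t : ℝ) : 0 ≤ distNearestInt t := abs_nonneg _

theorem distNearestInt_le_half (t : ℝ) : distNearestInt t ≤ 1 / 2 := abs_sub_round t

theorem continuous_distNearestInt : Continuous distNearestInt := by
  have h_norm : distNearestInt = fun t : ℝ ↦ ‖(t : UnitAddCircle)‖ :=
    funext fun _ ↦ UnitAddCircle.norm_eq.symm
  rw [h_norm]
  exact continuous_norm.comp (AddCircle.continuous_mk' 1)

theorem exists_modEq_and_distNearestInt_div_eq (c : ℤ) {q : ℕ} (hq : 0 < q) :
    ∃ C : ℤ, C ≡ c [ZMOD q] ∧ 2 * |C| ≤ q ∧ distNearestInt (c / q) = |C| / q := by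
  have hq' : (0 : ℝ) < q := mod_cast hq
  let C : ℤ := c - q * round (c / q : ℝ)
  have hC : distNearestInt (c / q) = |C| / q := by
    rw [distNearestInt, ← Nat.abs_cast q, Int.cast_abs, ← abs_div, Nat.abs_cast]
    congr 1
    push_cast [C]
    field_simp
  refine ⟨C, Int.modEq_iff_dvd.2 ⟨round (c / q : ℝ), by ring⟩, ?_, hC⟩
  have h_half := distNearestInt_le_half (c / q)
  rw [hC, div_le_div_iff₀ hq' two_pos, one_mul, mul_comm] at h_half
  exact_mod_cast h_half

/-- The quantity `Q * min_{1 ≤ x < Q} ‖αx‖ * ‖βx‖` attached to the pair `p = (α, β)`. The minimum is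
encoded as an infimum of real numbers, so the value is `0` when `Q ≤ 1`. -/
noncomputable def scaledMinProd (p : ℝ × ℝ) (Q : ℕ) : ℝ :=
  Q * sInf {y : ℝ | ∃ x : ℕ, 1 ≤ x ∧ x < Q ∧
    y = distNearestInt (p.1 * x) * distNearestInt (p.2 * x)}

theorem scaledMinProd_eq_mul_inf' (p : ℝ × ℝ) {Q : ℕ} (hQ : 1 < Q) :
    scaledMinProd p Q = Q * (Finset.Ico 1 Q).inf' (Finset.nonempty_Ico.2 hQ)
      fun x ↦ distNearestInt (p.1 * x) * distNearestInt (p.2 * x) := by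
  rw [scaledMinProd, Finset.inf'_eq_csInf_image]
  congr 2
  ext y
  simp only [Set.mem_ofPred_eq, Set.mem_image, Finset.coe_Ico, Set.mem_Ico, and_assoc, eq_comm]

theorem continuous_scaledMinProd (Q : ℕ) : Continuous (scaledMinProd · Q) := by
  rcases le_or_gt Q 1 with hQ | hQ
  · have h_empty (y : ℝ) (p : ℝ × ℝ) : ¬ ∃ x : ℕ, 1 ≤ x ∧ x < Q ∧
        y = distNearestInt (p.1 * x) * distNearestInt (p.2 * x) := by
      rintro ⟨x, hx⟩
      lia
    simp only [scaledMinProd, h_empty, Set.ofPred_false, Real.sInf_empty, mul_zero]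
    exact continuous_const
  · simp only [scaledMinProd_eq_mul_inf' _ hQ]
    refine continuous_const.mul (Continuous.finset_inf'_apply _ fun x _ ↦ ?_)
    exact (continuous_distNearestInt.comp (by fun_prop)).mul
      (continuous_distNearestInt.comp (by fun_prop))

theorem scaledMinProd_le_one (p : ℝ × ℝ) (Q : ℕ) (hQ : 1 < Q) : scaledMinProd p Q ≤ 1 := by
  obtain ⟨x, hx_pos, hx_le, hx⟩ :=
    Real.exists_nat_abs_mul_sub_round_le p.1 (n := Q - 1) (by lia)
  have hQ_pos : (0 : ℝ) < Q := by positivity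
  have h_fst : distNearestInt (p.1 * x) ≤ 1 / Q := by
    rwa [mul_comm, ← Nat.cast_add_one, Nat.sub_add_cancel hQ.le] at hx
  calc scaledMinProd p Q
      ≤ Q * (distNearestInt (p.1 * x) * distNearestInt (p.2 * x)) := by
        rw [scaledMinProd_eq_mul_inf' p hQ]
        gcongr
        exact Finset.inf'_le _ (Finset.mem_Ico.2 ⟨hx_pos, by lia⟩)
    _ ≤ Q * (1 / Q * 1) := by
        have h_snd := distNearestInt_le_half (p.2 * x)
        have := distNearestInt_nonneg (p.2 * x)
        gcongr
        linarith
    _ = 1 := by field_simp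

end DistNearestInt

section Approximation

open Nat (fib)

theorem fib_div_fib_le_scaledMinProd {N : ℕ} (hN : 2 ≤ N) {a b : ℤ}
    (h_dvd : (fib (N + 2) : ℤ) ∣ a * fib (N + 1) + b) (h_coprime : IsCoprime a (fib (N + 2))) :
    (fib N / fib (N + 2) : ℝ) ≤ scaledMinProd (a / fib (N + 2), b / fib (N + 2)) (fib (N + 2)) := by
  have hQ : 1 < fib (N + 2) :=
    (by decide : 1 < fib 4).trans_le (Nat.fib_mono (Nat.add_le_add_right hN 2))
  rw [scaledMinProd_eq_mul_inf' _ hQ, ← div_le_iff₀' (by positivity), Finset.le_inf'_iff]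
  intro x hx
  obtain ⟨hx_pos, hx_lt⟩ := Finset.mem_Ico.1 hx
  obtain ⟨X, hX_mod, hX_half, hX⟩ := exists_modEq_and_distNearestInt_div_eq (a * x) hQ.pos
  obtain ⟨Y, hY_mod, -, hY⟩ := exists_modEq_and_distNearestInt_div_eq (b * x) hQ.pos
  have hXY_dvd : (fib (N + 2) : ℤ) ∣ X * fib (N + 1) + Y := by
    refine Int.modEq_zero_iff_dvd.1 (((hX_mod.mul_right _).add hY_mod).trans ?_)
    rw [show a * x * fib (N + 1) + b * x = (a * fib (N + 1) + b) * x by ring]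
    exact Int.modEq_zero_iff_dvd.2 (h_dvd.mul_right _)
  have hX_ne : X ≠ 0 := by
    rintro rfl
    have : (fib (N + 2) : ℤ) ∣ x :=
      h_coprime.symm.dvd_of_dvd_mul_left (Int.modEq_zero_iff_dvd.1 hX_mod.symm)
    exact hx_lt.not_ge (Nat.le_of_dvd hx_pos (mod_cast this))
  have hX_lt : |X| < fib (N + 1) := by
    have := Nat.fib_lt_fib_succ hN
    have := Nat.fib_add_two (n := N)
    lia
  have h_prod : (fib N : ℝ) ≤ |X| * |Y| := mod_cast fib_le_abs_mul_abs hXY_dvd hX_ne hX_lt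
  push_cast at hX hY
  simp only [div_mul_eq_mul_div]
  rw [hX, hY, div_mul_div_comm, div_div]
  gcongr
  exact_mod_cast h_prod

theorem dense_exists_lt_scaledMinProd {c : ℝ} (hc : c < 2 / (3 + √5)) (M : ℕ) :
    Dense {p | ∃ Q ≥ M, c < scaledMinProd p Q} := by
  have h_dense : Dense (Set.range (Prod.map Rat.cast Rat.cast : ℚ × ℚ → ℝ × ℝ) \ {0}) :=
    (Rat.denseRange_cast.prodMap Rat.denseRange_cast).sdiff_singleton 0
  refine dense_closure.1 (h_dense.mono ?_)
  rintro _ ⟨⟨⟨r, s⟩, rfl⟩, h_ne⟩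
  refine Metric.mem_closure_iff.2 fun ε hε ↦ ?_
  have hrs : (r, s) ≠ 0 := by
    rintro ⟨⟩
    exact h_ne (by simp)
  have h_near := frequently_exists_fib_dvd_mul_fib_add_near hrs hε
  rw [← map_add_atTop_eq_nat 1, frequently_map] at h_near
  have h_ratio : ∀ᶠ N in atTop, c < fib N / fib (N + 2) :=
    tendsto_fib_div_fib_add_two_atTop.eventually_const_lt hc
  have h_large : ∀ᶠ N in atTop, M ≤ fib (N + 2) :=
    (tendsto_fib_atTop.comp (tendsto_add_atTop_nat 2)).eventually_ge_atTop M
  obtain ⟨N, ⟨a, b, h_dvd, h_coprime, ha, hb⟩, hcN, hM, hN⟩ :=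
    (h_near.and_eventually (h_ratio.and (h_large.and (eventually_ge_atTop 2)))).exists
  refine ⟨_, ⟨fib (N + 2), hM, hcN.trans_le (fib_div_fib_le_scaledMinProd hN h_dvd h_coprime)⟩, ?_⟩
  rw [dist_comm, Prod.dist_eq, max_lt_iff]
  exact ⟨ha, hb⟩

end Approximation

theorem stmt_0_general :
    ∀ᶠ p : ℝ × ℝ in residual (ℝ × ℝ), 2 / (3 + √5) ≤ limsup (scaledMinProd p) atTop :=
  eventually_residual_le_limsup (fun Q ↦ (continuous_scaledMinProd Q).lowerSemicontinuous)
    (fun p ↦ isBoundedUnder_of_eventually_le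
      ((eventually_gt_atTop 1).mono (scaledMinProd_le_one p)))
    fun _ ↦ dense_exists_lt_scaledMinProd

/-- There exist real numbers α and β such that
`limsup_{Q→∞} Q · (min_{x ∈ ℤ, 1 ≤ x < Q} ‖αx‖·‖βx‖) ≥ 2/(3+√5)`. -/
theorem stmt_0 :
    ∃ α β : ℝ,
      2 / (3 + Real.sqrt 5) ≤
        Filter.limsup
          (fun Q : ℕ =>
            (Q : ℝ) *
              sInf {y : ℝ | ∃ x : ℕ, 1 ≤ x ∧ x < Q ∧
                y = distNearestInt (α * x) * distNearestInt (β * x)})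
          Filter.atTop := by
  obtain ⟨⟨α, β⟩, h⟩ := (dense_of_mem_residual stmt_0_general).nonempty
  exact ⟨α, β, h⟩
end

section
/- Let n ≥ 3 and let x be a positive integer and y an integer. If y/x ≠ F_{k−1}/F_k for every k with 1 ≤ k ≤ n (that is, y/x is not a convergent of the continued fraction expansion of F_{n−1}/F_n), then |F_{n−1}/F_n − y/x| ≥ 1/(2x²). -/
/-!
Legendre's theorem says that a fraction `y / x` within `1 / (2 * x ^ 2)` of `ξ` is a convergent
of `ξ`, so only the convergents of `F_n / F_{n+1}` have to be found. These follow by induction on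
`n` from `F_{n+1} / F_{n+2} = 1 / (1 + F_n / F_{n+1})`, since passing from `ξ` to `1 / (1 + ξ)`
with `ξ > 0` prepends the integer part `0` and otherwise transforms each convergent in the same way.
-/

theorem convergent_add_intCast (ξ : ℝ) (m : ℤ) (j : ℕ) :
    (ξ + m).convergent j = ξ.convergent j + m := by
  cases j with
  | zero => simp only [Real.convergent_zero, Int.floor_add_intCast, Int.cast_add]
  | succ j =>
    simp only [Real.convergent_succ, Int.floor_add_intCast, Int.fract_add_intCast, Int.cast_add]
    ring

theorem floor_inv_add_one_eq_zero {ξ : ℝ} (hξ : 0 < ξ) : ⌊(ξ + 1)⁻¹⌋ = 0 :=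
  Int.floor_eq_zero_iff.2 ⟨by positivity, inv_lt_one_of_one_lt₀ (lt_add_of_pos_left 1 hξ)⟩

theorem convergent_inv_add_one_zero {ξ : ℝ} (hξ : 0 < ξ) : (ξ + 1)⁻¹.convergent 0 = 0 := by
  rw [Real.convergent_zero, floor_inv_add_one_eq_zero hξ, Int.cast_zero]

theorem convergent_inv_add_one_succ {ξ : ℝ} (hξ : 0 < ξ) (j : ℕ) :
    (ξ + 1)⁻¹.convergent (j + 1) = (ξ.convergent j + 1)⁻¹ := by
  have hfloor := floor_inv_add_one_eq_zero hξ
  have hfract : Int.fract (ξ + 1)⁻¹ = (ξ + 1)⁻¹ := by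
    rw [Int.fract, hfloor, Int.cast_zero, sub_zero]
  have hshift : (ξ + 1).convergent j = ξ.convergent j + 1 := mod_cast convergent_add_intCast ξ 1 j
  rw [Real.convergent_succ, hfloor, hfract, inv_inv, hshift, Int.cast_zero, zero_add]

theorem inv_fib_div_fib_succ_add_one {K : Type*} [DivisionRing K] [CharZero K] (n : ℕ) :
    ((Nat.fib n : K) / Nat.fib (n + 1) + 1)⁻¹ = Nat.fib (n + 1) / Nat.fib (n + 2) := by
  have hfib : (Nat.fib (n + 1) : K) ≠ 0 := Nat.cast_ne_zero.2 (Nat.fib_pos.2 n.succ_pos).ne'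
  rw [div_add_one hfib, inv_div, ← Nat.cast_add, ← Nat.fib_add_two]

/-- The last partial quotients `1, 1` of `[0; 1, …, 1]` are merged into a `2` by
`Real.convergent`, so the convergent `F_{n-1} / F_n` of `F_n / F_{n+1}` is skipped. -/
theorem convergent_fib_div_fib_succ (n j : ℕ) :
    ((Nat.fib n : ℝ) / Nat.fib (n + 1)).convergent j =
      if j + 1 < n then (Nat.fib j : ℚ) / Nat.fib (j + 1)
      else (Nat.fib n : ℚ) / Nat.fib (n + 1) := by
  induction n generalizing j with
  | zero => simp
  | succ n ih =>
    obtain rfl | hn := n.eq_zero_or_pos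
    · simpa using Real.convergent_of_int (ξ := 1) j
    have hpos : (0 : ℝ) < (Nat.fib n : ℝ) / Nat.fib (n + 1) :=
      div_pos (Nat.cast_pos.2 (Nat.fib_pos.2 hn)) (Nat.cast_pos.2 (Nat.fib_pos.2 n.succ_pos))
    rw [← inv_fib_div_fib_succ_add_one]
    cases j with
    | zero => simp [convergent_inv_add_one_zero hpos, hn]
    | succ j =>
      simp only [convergent_inv_add_one_succ hpos, ih, add_lt_add_iff_right]
      split_ifs <;> exact inv_fib_div_fib_succ_add_one _

theorem exists_convergent_fib_div_fib_succ_eq (n j : ℕ) :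
    ∃ k ≤ n, ((Nat.fib n : ℝ) / Nat.fib (n + 1)).convergent j =
      (Nat.fib k : ℚ) / Nat.fib (k + 1) := by
  rw [convergent_fib_div_fib_succ]
  split_ifs with hj
  · exact ⟨j, by omega, rfl⟩
  · exact ⟨n, le_rfl, rfl⟩

theorem den_intCast_div_sq_le {x : ℤ} (hx : x ≠ 0) (y : ℤ) :
    (((y : ℚ) / x).den : ℤ) ^ 2 ≤ x ^ 2 := by
  have hdvd : (((y : ℚ) / x).den : ℤ) ∣ x := by
    simpa only [Rat.divInt_eq_div] using Rat.den_dvd y x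
  exact Int.le_of_dvd (by positivity) (pow_dvd_pow_of_dvd hdvd 2)

/-- Unlike in `Real.exists_rat_eq_convergent`, the fraction need not be in lowest terms. -/
theorem exists_intCast_div_eq_convergent {ξ : ℝ} {x y : ℤ} (hx : x ≠ 0)
    (h : |ξ - y / x| < 1 / (2 * (x : ℝ) ^ 2)) : ∃ j, (y : ℚ) / x = ξ.convergent j := by
  apply Real.exists_rat_eq_convergent
  have hden : (((y : ℚ) / x).den : ℝ) ^ 2 ≤ (x : ℝ) ^ 2 := mod_cast den_intCast_div_sq_le hx y
  calc |ξ - ((y / x : ℚ) : ℝ)| = |ξ - y / x| := by push_cast; rfl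
    _ < 1 / (2 * (x : ℝ) ^ 2) := h
    _ ≤ 1 / (2 * (((y : ℚ) / x).den : ℝ) ^ 2) := by gcongr

/-- If `y/x` is not a convergent `F_{k-1}/F_k` (1 ≤ k ≤ n) of `F_{n-1}/F_n`, then
`|F_{n-1}/F_n − y/x| ≥ 1/(2x²)`. -/
theorem stmt_2 (n : ℕ) (hn : 3 ≤ n) (x : ℤ) (hx : 0 < x) (y : ℤ)
    (h : ∀ k : ℕ, 1 ≤ k → k ≤ n →
      (y : ℝ) / (x : ℝ) ≠ (Nat.fib (k - 1) : ℝ) / (Nat.fib k : ℝ)) :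
    |(Nat.fib (n - 1) : ℝ) / (Nat.fib n : ℝ) - (y : ℝ) / (x : ℝ)| ≥
      1 / (2 * (x : ℝ) ^ 2) := by
  obtain ⟨m, rfl⟩ : ∃ m, n = m + 1 := ⟨n - 1, by omega⟩
  by_contra! hclose
  obtain ⟨j, hj⟩ := exists_intCast_div_eq_convergent hx.ne' hclose
  obtain ⟨k, hkm, hk⟩ := exists_convergent_fib_div_fib_succ_eq m j
  have hyx : (((y : ℚ) / x : ℚ) : ℝ) = ((Nat.fib k / Nat.fib (k + 1) : ℚ) : ℝ) :=
    congrArg Rat.cast (hj.trans hk)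
  exact h (k + 1) k.succ_pos (Nat.succ_le_succ hkm) (by simpa using hyx)
end

section
/- For every ε > 0 there exists N such that for all n ≥ N and all integers k with 2 ≤ k < n, |F_{n−1}/F_n − F_{k−1}/F_k| ≥ 1/( F_k² · ((1+√5)/2 + 1 + ε) ). -/
/-! For `n = k + d` with `k` and `d` positive, d'Ocagne's identity gives
`|F_{n-1}/F_n - F_{k-1}/F_k| = F_d / (F_n F_k)`, and the addition formula turns `F_n / (F_k F_d)`
into `r_k + r_d - 1`, where `r_i = F_{i+1}/F_i`. All `r_i` are at most `2` and `r_i → φ`. Since one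
of `k` and `d` is large when `n` is, `r_k + r_d - 1` is at most `φ + 1 + ε`, uniformly in `k`. -/

open Filter

theorem fib_add_mul_fib_succ_sub_fib_add_succ_mul_fib {R : Type*} [CommRing R] (m n : ℕ) :
    (Nat.fib (m + n) * Nat.fib (m + 1) - Nat.fib (m + n + 1) * Nat.fib m : R) =
      (-1) ^ m * Nat.fib n := by
  induction m with
  | zero => simp
  | succ m ih =>
    rw [Nat.add_right_comm m 1 n, Nat.fib_add_two, Nat.fib_add_two, pow_succ]
    push_cast
    linear_combination -ih

section

variable {K : Type*} [Field K]

theorem fib_add_div_fib_mul_fib [CharZero K] {m n : ℕ} (hm : m ≠ 0) (hn : n ≠ 0) :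
    (Nat.fib (m + n) / (Nat.fib m * Nat.fib n) : K) =
      Nat.fib (m + 1) / Nat.fib m + Nat.fib (n + 1) / Nat.fib n - 1 := by
  have fib_m_ne_zero : (Nat.fib m : K) ≠ 0 := by simpa using hm
  have fib_n_ne_zero : (Nat.fib n : K) ≠ 0 := by simpa using hn
  obtain ⟨m, rfl⟩ := Nat.exists_eq_succ_of_ne_zero hm
  have addition_formula : (Nat.fib (m + 1 + n) : K) =
      Nat.fib m * Nat.fib n + Nat.fib (m + 1) * Nat.fib (n + 1) := by
    rw [Nat.add_right_comm]
    exact_mod_cast Nat.fib_add m n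
  rw [addition_formula, Nat.succ_eq_add_one, Nat.fib_add_two]
  push_cast
  field_simp
  ring

variable [LinearOrder K] [IsStrictOrderedRing K]

theorem fib_succ_div_fib_le_two (n : ℕ) : (Nat.fib (n + 1) / Nat.fib n : K) ≤ 2 := by
  rcases n with _ | n
  · simp -- The left side is `1 / 0 = 0`.
  · have fib_le : Nat.fib (n + 2) ≤ 2 * Nat.fib (n + 1) := by
      rw [Nat.fib_add_two, two_mul]
      exact Nat.add_le_add_right Nat.fib_le_fib_succ _
    exact div_le_of_le_mul₀ (Nat.cast_nonneg _) zero_le_two (mod_cast fib_le)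

theorem abs_fib_pred_div_fib_sub_fib_pred_div_fib {k n : ℕ} (hk : k ≠ 0) (hkn : k ≤ n) :
    |(Nat.fib (n - 1) / Nat.fib n - Nat.fib (k - 1) / Nat.fib k : K)| =
      Nat.fib (n - k) / (Nat.fib n * Nat.fib k) := by
  obtain ⟨k, rfl⟩ := Nat.exists_eq_succ_of_ne_zero hk
  obtain ⟨d, rfl⟩ := Nat.exists_eq_add_of_le hkn
  have fib_k_pos : (0 : K) < Nat.fib (k + 1) := by simp
  have fib_n_pos : (0 : K) < Nat.fib (k + d + 1) := by simp
  simp only [Nat.succ_eq_add_one, Nat.add_right_comm k 1 d, Nat.add_sub_cancel]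
  rw [div_sub_div _ _ fib_n_pos.ne' fib_k_pos.ne', fib_add_mul_fib_succ_sub_fib_add_succ_mul_fib,
    abs_div, abs_mul, abs_neg_one_pow, one_mul, Nat.abs_cast,
    abs_of_pos (mul_pos fib_n_pos fib_k_pos), show k + d + 1 - (k + 1) = d by omega]

end

theorem eventually_atTop_forall_add_le_of_forall_le {α : Type*} [AddCommMonoid α] [Preorder α]
    [AddLeftMono α] {u : ℕ → α} {b c : α} (hb : ∀ i, u i ≤ b) (hc : ∀ᶠ i in atTop, u i ≤ c) :
    ∀ᶠ n in atTop, ∀ i j, i + j = n → u i + u j ≤ b + c := by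
  obtain ⟨M, hM⟩ := eventually_atTop.1 hc
  filter_upwards [eventually_ge_atTop (2 * M)] with n hn i j hij
  obtain hi | hj : M ≤ i ∨ M ≤ j := by omega
  · rw [add_comm]
    exact add_le_add (hb j) (hM i hi)
  · exact add_le_add (hb i) (hM j hj)

theorem eventually_fib_add_div_fib_mul_fib_le {c : ℝ} (hc : Real.goldenRatio + 1 < c) :
    ∀ᶠ n in atTop, ∀ i j, i ≠ 0 → j ≠ 0 → i + j = n →
      (Nat.fib n / (Nat.fib i * Nat.fib j) : ℝ) ≤ c := by
  have ratio_le : ∀ᶠ i : ℕ in atTop, (Nat.fib (i + 1) / Nat.fib i : ℝ) ≤ c - 1 :=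
    tendsto_fib_succ_div_fib_atTop.eventually_le_const (by linarith)
  filter_upwards [eventually_atTop_forall_add_le_of_forall_le fib_succ_div_fib_le_two ratio_le]
    with n hn i j hi hj hij
  have ratio_add_le := hn i j hij
  rw [← hij, fib_add_div_fib_mul_fib hi hj]
  linarith

/-- For every ε > 0 and all large `n`, for all `2 ≤ k < n`,
`|F_{n-1}/F_n − F_{k-1}/F_k| ≥ 1/(F_k² ((1+√5)/2 + 1 + ε))`. -/
theorem stmt_4 (ε : ℝ) (hε : 0 < ε) :
    ∃ N : ℕ, ∀ n : ℕ, N ≤ n → ∀ k : ℕ, 2 ≤ k → k < n →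
      |(Nat.fib (n - 1) : ℝ) / (Nat.fib n : ℝ) - (Nat.fib (k - 1) : ℝ) / (Nat.fib k : ℝ)| ≥
        1 / ((Nat.fib k : ℝ) ^ 2 * ((1 + Real.sqrt 5) / 2 + 1 + ε)) := by
  obtain ⟨N, hN⟩ := eventually_atTop.1 <|
    eventually_fib_add_div_fib_mul_fib_le (lt_add_of_pos_right (Real.goldenRatio + 1) hε)
  refine ⟨N, fun n hn k hk hkn => ?_⟩
  have ratio_le := hN n hn k (n - k) (by omega) (by omega) (by omega)
  have fib_k_pos : (0 : ℝ) < Nat.fib k := Nat.cast_pos.2 (Nat.fib_pos.2 (by omega))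
  have fib_n_pos : (0 : ℝ) < Nat.fib n := Nat.cast_pos.2 (Nat.fib_pos.2 (by omega))
  have fib_sub_pos : (0 : ℝ) < Nat.fib (n - k) := Nat.cast_pos.2 (Nat.fib_pos.2 (by omega))
  rw [abs_fib_pred_div_fib_sub_fib_pred_div_fib (by omega) hkn.le, ge_iff_le]
  calc (1 : ℝ) / ((Nat.fib k : ℝ) ^ 2 * (Real.goldenRatio + 1 + ε))
      ≤ 1 / ((Nat.fib k : ℝ) ^ 2 * (Nat.fib n / (Nat.fib k * Nat.fib (n - k)))) := by gcongr
    _ = (Nat.fib (n - k) : ℝ) / (Nat.fib n * Nat.fib k) := by field_simp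
end

section
/- For every ε > 0 there exists N such that for all n ≥ N and all integers x with 0 < |x| ≤ F_n/2, ‖x/F_n‖ · ‖F_{n−1}·x/F_n‖ ≥ 1/( F_n · ((3+√5)/2 + ε) ). -/
/-!
Write `F = fib (n + 2)`. The numerators `y` and `z` of the two distances satisfy
`z = fib (n + 1) * y - k * F` for some integer `k`, so everything rests on the law of best
approximation for the convergents of `fib (n + 1) / F`, which are quotients of consecutive
Fibonacci numbers: if `fib m ≤ |y| < fib (m + 1)`, then `|z| ≥ fib (n + 2 - m)`. To see this,
expand the lattice point `(y, z)` in the basis given by two consecutive convergents; since `|y|` is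
small, the two coordinates have opposite signs, and then the two contributions to `z` do not
cancel. Since `fib m * fib (n + 2 - m) ≥ fib n`, the product of the distances is at least
`fib n / F ^ 2`, and `F / fib n` tends to the square of the golden ratio, which is `(3 + √5) / 2`.
-/

open Filter Topology

theorem exists_consecutive_fib_coordinates {R : Type*} [CommRing R] (m p : ℕ) (x k : R) :
    ∃ a b : R, x = a * Nat.fib m + b * Nat.fib (m + 1) ∧
      Nat.fib (m + p) * x - k * Nat.fib (m + p + 1) =
        (-1) ^ (m + 1) * (a * Nat.fib (p + 1) - b * Nat.fib p) := by
  induction m generalizing p with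
  | zero => exact ⟨k, x, by simp, by simp only [zero_add, pow_one]; ring⟩
  | succ m ih =>
    obtain ⟨a, b, hx, hz⟩ := ih (p + 1)
    refine ⟨b - a, a, ?_, ?_⟩
    · rw [hx, Nat.fib_add_two]
      push_cast
      ring
    · rw [add_right_comm m 1 p, add_assoc m p 1, hz, Nat.fib_add_two]
      push_cast
      ring

theorem le_abs_mul_sub_mul_of_abs_mul_add_mul_lt {A B C D a b : ℤ} (hA : 0 ≤ A) (hC : 0 ≤ C)
    (hD : 0 ≤ D) (hne : a * A + b * B ≠ 0) (hlt : |a * A + b * B| < B) :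
    C ≤ |a * C - b * D| := by
  have hB : 0 < B := (abs_nonneg _).trans_lt hlt
  have ha₀ : a ≠ 0 := by
    rintro rfl
    rw [zero_mul, zero_add] at hne hlt
    exact hne (Int.eq_zero_of_abs_lt_dvd (dvd_mul_left B b) hlt)
  wlog ha : 0 < a generalizing a b
  · have hneg : -a * A + -b * B = -(a * A + b * B) := by ring
    rw [abs_sub_comm, show b * D - a * C = -a * C - -b * D by ring]
    exact this (hneg ▸ neg_ne_zero.mpr hne) (by rwa [hneg, abs_neg]) (neg_ne_zero.mpr ha₀)
      (by lia)
  have hb : b ≤ 0 := by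
    by_contra! hb
    have hBb : B ≤ b * B := le_mul_of_one_le_left hB.le hb
    linarith [mul_nonneg ha.le hA, (abs_lt.mp hlt).2]
  calc C ≤ a * C := le_mul_of_one_le_left hC ha
    _ ≤ a * C - b * D := by linarith [mul_nonpos_of_nonpos_of_nonneg hb hD]
    _ ≤ |a * C - b * D| := le_abs_self _

theorem fib_le_abs_fib_mul_sub_mul_fib {m : ℕ} (p : ℕ) {x : ℤ} (k : ℤ) (hx₀ : x ≠ 0)
    (hx : |x| < Nat.fib (m + 1)) :
    (Nat.fib (p + 1) : ℤ) ≤ |Nat.fib (m + p) * x - k * Nat.fib (m + p + 1)| := by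
  obtain ⟨a, b, rfl, hz⟩ := exists_consecutive_fib_coordinates m p x k
  rw [hz, abs_mul, abs_neg_one_pow, one_mul]
  exact le_abs_mul_sub_mul_of_abs_mul_add_mul_lt (by positivity) (by positivity) (by positivity)
    hx₀ hx

theorem fib_add_add_one_le_fib_add_two_mul_fib_add_one (m p : ℕ) :
    Nat.fib (m + p + 1) ≤ Nat.fib (m + 2) * Nat.fib (p + 1) := by
  rw [Nat.fib_add, Nat.fib_add_two, add_mul]
  gcongr
  exact p.le_succ

theorem fib_le_abs_mul_abs_fib_mul_sub_mul_fib {n : ℕ} {x : ℤ} (k : ℤ) (hx₀ : x ≠ 0)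
    (hx : |x| < Nat.fib (n + 2)) :
    (Nat.fib n : ℤ) ≤ |x| * |Nat.fib (n + 1) * x - k * Nat.fib (n + 2)| := by
  obtain ⟨m, hm⟩ : ∃ m, x.natAbs.greatestFib = m + 2 :=
    Nat.exists_eq_add_of_le' <| Nat.le_greatestFib.mpr <| Int.natAbs_pos.mpr hx₀
  have hlower : (Nat.fib (m + 2) : ℤ) ≤ |x| := by
    rw [Int.abs_eq_natAbs, ← hm]
    exact_mod_cast Nat.fib_greatestFib_le _
  have hupper : |x| < Nat.fib (m + 2 + 1) := by
    rw [Int.abs_eq_natAbs, ← hm]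
    exact_mod_cast Nat.lt_fib_greatestFib_add_one _
  have hmn : m + 2 < n + 2 := by
    rw [← hm, Nat.greatestFib_lt]
    rw [Int.abs_eq_natAbs] at hx
    exact_mod_cast hx
  obtain ⟨p, rfl⟩ : ∃ p, n = m + p + 1 := ⟨n - m - 1, by lia⟩
  calc (Nat.fib (m + p + 1) : ℤ)
      ≤ Nat.fib (m + 2) * Nat.fib (p + 1) := by
        exact_mod_cast fib_add_add_one_le_fib_add_two_mul_fib_add_one m p
    _ ≤ |x| * |Nat.fib (m + 2 + p) * x - k * Nat.fib (m + 2 + p + 1)| := by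
        gcongr
        exact fib_le_abs_fib_mul_sub_mul_fib p k hx₀ hupper
    _ = |x| * |Nat.fib (m + p + 1 + 1) * x - k * Nat.fib (m + p + 1 + 2)| := by
        rw [show m + 2 + p = m + p + 1 + 1 by ring]

theorem distNearestInt_div (t : ℝ) {c : ℝ} (hc : 0 < c) :
    distNearestInt (t / c) = |t - round (t / c) * c| / c := by
  rw [distNearestInt, ← abs_of_pos hc, ← abs_div, abs_of_pos hc, sub_div,
    mul_div_cancel_right₀ _ hc.ne']

theorem abs_sub_round_div_mul_lt (t : ℝ) {c : ℝ} (hc : 0 < c) :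
    |t - round (t / c) * c| < c := by
  rw [← div_lt_one hc, ← distNearestInt_div t hc]
  exact (abs_sub_round _).trans_lt one_half_lt_one

theorem fib_div_sq_le_distNearestInt_mul_distNearestInt {n : ℕ} {x : ℤ}
    (hx : ¬ (Nat.fib (n + 2) : ℤ) ∣ x) :
    (Nat.fib n : ℝ) / Nat.fib (n + 2) ^ 2 ≤
      distNearestInt (x / Nat.fib (n + 2)) *
        distNearestInt (Nat.fib (n + 1) * x / Nat.fib (n + 2)) := by
  have hF : (0 : ℝ) < Nat.fib (n + 2) := by exact_mod_cast Nat.fib_pos.mpr (by lia)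
  rw [distNearestInt_div _ hF, distNearestInt_div _ hF, div_mul_div_comm, ← sq]
  gcongr
  set j := round ((x : ℝ) / Nat.fib (n + 2))
  set k := round ((Nat.fib (n + 1) * x : ℝ) / Nat.fib (n + 2))
  have hy₀ : x - j * Nat.fib (n + 2) ≠ 0 := fun h => hx ⟨j, by linarith⟩
  have hy : |x - j * Nat.fib (n + 2)| < Nat.fib (n + 2) := by
    have hy_real : |(x : ℝ) - j * Nat.fib (n + 2)| < Nat.fib (n + 2) :=
      abs_sub_round_div_mul_lt x hF
    exact_mod_cast hy_real
  have hbest := fib_le_abs_mul_abs_fib_mul_sub_mul_fib (k - Nat.fib (n + 1) * j) hy₀ hy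
  have hz : Nat.fib (n + 1) * (x - j * Nat.fib (n + 2)) -
      (k - Nat.fib (n + 1) * j) * Nat.fib (n + 2) =
      Nat.fib (n + 1) * x - k * Nat.fib (n + 2) := by ring
  rw [hz] at hbest
  exact_mod_cast hbest

theorem tendsto_fib_add_two_div_fib_atTop :
    Tendsto (fun n => (Nat.fib (n + 2) / Nat.fib n : ℝ)) atTop (𝓝 (Real.goldenRatio ^ 2)) := by
  rw [sq]
  refine ((tendsto_fib_succ_div_fib_atTop.comp (tendsto_add_atTop_nat 1)).mul
    tendsto_fib_succ_div_fib_atTop).congr fun n => ?_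
  exact div_mul_div_cancel₀ (by exact_mod_cast (Nat.fib_pos.mpr n.succ_pos).ne')

theorem eventually_fib_add_two_lt {c : ℝ} (hc : Real.goldenRatio ^ 2 < c) :
    ∀ᶠ n in atTop, (Nat.fib (n + 2) : ℝ) < c * Nat.fib n := by
  filter_upwards [tendsto_fib_add_two_div_fib_atTop.eventually_lt_const hc, eventually_gt_atTop 0]
    with n hn hn₀
  exact (div_lt_iff₀ (by exact_mod_cast Nat.fib_pos.mpr hn₀)).mp hn

theorem goldenRatio_sq_eq_three_add_sqrt_five_div_two : Real.goldenRatio ^ 2 = (3 + √5) / 2 := by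
  rw [Real.goldenRatio_sq]
  ring

theorem stmt_5_general (ε : ℝ) (hε : 0 < ε) :
    ∃ N : ℕ, ∀ n : ℕ, N ≤ n → ∀ x : ℤ, ¬ (Nat.fib n : ℤ) ∣ x →
      distNearestInt ((x : ℝ) / (Nat.fib n : ℝ)) *
          distNearestInt ((Nat.fib (n - 1) : ℝ) * (x : ℝ) / (Nat.fib n : ℝ)) ≥
        1 / ((Nat.fib n : ℝ) * ((3 + Real.sqrt 5) / 2 + ε)) := by
  obtain ⟨M, hM⟩ := eventually_atTop.mp <|
    eventually_fib_add_two_lt <|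
      goldenRatio_sq_eq_three_add_sqrt_five_div_two.trans_lt (lt_add_of_pos_right _ hε)
  refine ⟨M + 2, fun n hn x hx => ?_⟩
  obtain ⟨n, rfl⟩ := Nat.exists_eq_add_of_le' (le_of_add_le_right hn)
  have hF : (0 : ℝ) < Nat.fib (n + 2) := by exact_mod_cast Nat.fib_pos.mpr (by lia)
  refine le_trans ?_ (fib_div_sq_le_distNearestInt_mul_distNearestInt hx)
  rw [div_le_div_iff₀ (by positivity) (by positivity)]
  calc 1 * (Nat.fib (n + 2) : ℝ) ^ 2
      = Nat.fib (n + 2) * Nat.fib (n + 2) := by ring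
    _ ≤ Nat.fib (n + 2) * (((3 + √5) / 2 + ε) * Nat.fib n) := by
        gcongr
        exact (hM n (by lia)).le
    _ = Nat.fib n * (Nat.fib (n + 2) * ((3 + √5) / 2 + ε)) := by ring

/-- For every ε > 0 and all large `n`, for all integers `x` with `0 < |x| ≤ F_n/2`,
`‖x/F_n‖ · ‖F_{n-1} x / F_n‖ ≥ 1/(F_n ((3+√5)/2 + ε))`. -/
theorem stmt_5 (ε : ℝ) (hε : 0 < ε) :
    ∃ N : ℕ, ∀ n : ℕ, N ≤ n → ∀ x : ℤ, x ≠ 0 → (|x| : ℝ) ≤ (Nat.fib n : ℝ) / 2 →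
      distNearestInt ((x : ℝ) / (Nat.fib n : ℝ)) *
          distNearestInt ((Nat.fib (n - 1) : ℝ) * (x : ℝ) / (Nat.fib n : ℝ)) ≥
        1 / ((Nat.fib n : ℝ) * ((3 + Real.sqrt 5) / 2 + ε)) := by
  obtain ⟨N, hN⟩ := stmt_5_general ε hε
  refine ⟨N, fun n hn x hx₀ hx => hN n hn x fun hdvd => hx₀ ?_⟩
  have hpos : (0 : ℝ) < |(x : ℝ)| := by positivity
  exact Int.eq_zero_of_abs_lt_dvd hdvd (by exact_mod_cast (by linarith : |(x : ℝ)| < Nat.fib n))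
end

section
/- Let (δ_ν)_{ν≥1} be any sequence of positive real numbers tending to 0. Then there exist real numbers α, β ∈ [0,1], a strictly increasing sequence of positive integers (n_ν), and integers (a_ν) with 1 ≤ a_ν < F_{n_ν} and gcd(a_ν, F_{n_ν}) = 1, such that for every ν: |α − a_ν/F_{n_ν}| ≤ δ_ν/F_{n_ν}² and |β − {F_{n_ν−1}·a_ν/F_{n_ν}}| ≤ δ_ν/F_{n_ν}². -/
/-!
For `n = 2 * m + 1`, d'Ocagne's identity makes `F_{m-1} / F_m` a rational approximation to
`F_{n-1} / F_n` with error at most `1 / F_m ^ 2`. Moving `a` within a window of length `F_m`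
therefore steers `F_{n-1} a / F_n` modulo one to any target, up to `O(1 / F_m)`, while `a / F_n`
moves by at most `F_m / F_n ≤ 1 / F_m`. If moreover `n` is prime, every prime factor of `F_n` is at
least `n - 1` and there are fewer than `n - 1` of them, so by the pigeonhole principle one of the
`n - 1` translates of `a` by multiples of `F_m` is coprime to `F_n`; the total error is
`O(n / F_m) → 0`. The points `(a / F_n, {F_{n-1} a / F_n})` with `gcd(a, F_n) = 1` and `n` large are
thus dense in the unit square, and Baire's theorem yields a point which they approximate at any
prescribed speed.
-/

open Filter Finset Metric Real unitInterval

lemma two_pow_card_primeFactors_le {n : ℕ} (hn : n ≠ 0) : 2 ^ #n.primeFactors ≤ n :=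
  calc 2 ^ #n.primeFactors ≤ ∏ p ∈ n.primeFactors, p :=
        pow_card_le_prod _ _ _ fun _ hp => (Nat.prime_of_mem_primeFactors hp).two_le
    _ ≤ n := Nat.le_of_dvd hn.bot_lt n.prod_primeFactors_dvd

lemma exists_coprime_add_mul {N d L : ℕ} (hN : N ≠ 0) (hd : d.Coprime N)
    (hL : ∀ p ∈ N.primeFactors, L ≤ p) (hcard : #N.primeFactors < L) (b : ℕ) :
    ∃ t < L, (b + t * d).Coprime N := by
  by_contra! hcon
  have hex : ∀ t ∈ range L, ∃ p ∈ N.primeFactors, p ∣ b + t * d := fun t ht => by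
    obtain ⟨p, hp, hpb, hpN⟩ := Nat.Prime.not_coprime_iff_dvd.mp (hcon t (mem_range.mp ht))
    exact ⟨p, Nat.mem_primeFactors.mpr ⟨hp, hpN, hN⟩, hpb⟩
  choose! p hpN hpb using hex
  obtain ⟨t, ht, t', ht', hne, heq⟩ :=
    exists_ne_map_eq_of_card_lt_of_maps_to (by simpa using hcard) hpN
  have hcop : (p t).Coprime d :=
    (hd.coprime_dvd_right (Nat.dvd_of_mem_primeFactors (hpN t ht))).symm
  have hmod : b + t * d ≡ b + t' * d [MOD p t] :=
    (Nat.modEq_zero_iff_dvd.mpr (hpb t ht)).trans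
      (Nat.modEq_zero_iff_dvd.mpr (heq ▸ hpb t' ht')).symm
  have hmod' : t ≡ t' [MOD p t] :=
    Nat.ModEq.cancel_right_of_coprime hcop (Nat.ModEq.add_left_cancel' b hmod)
  have hle := hL (p t) (hpN t ht)
  exact hne (hmod'.eq_of_lt_of_lt ((mem_range.mp ht).trans_le hle)
    ((mem_range.mp ht').trans_le hle))

lemma exists_lt_abs_mul_sub_sub_le {c : ℝ} {P M : ℕ} (hM : 0 < M) (hPM : P.Coprime M)
    (hc : |c * M - P| ≤ 1 / M) (y : ℝ) : ∃ s < M, ∃ k : ℤ, |c * s - k - y| ≤ 2 / M := by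
  have : NeZero M := ⟨hM.ne'⟩
  have hM' : (0 : ℝ) < M := by exact_mod_cast hM
  set r : ℤ := ⌊M * y⌋
  set s : ℕ := ((r : ZMod M) * (P : ZMod M)⁻¹).val with hs
  have hsM : s < M := ZMod.val_lt _
  have hsP : (((s : ℤ) * P : ℤ) : ZMod M) = (r : ℤ) := by
    push_cast
    rw [hs, ZMod.natCast_zmod_val, mul_assoc, mul_comm _ (P : ZMod M),
      ZMod.coe_mul_inv_eq_one P hPM, mul_one]
  obtain ⟨k, hk⟩ := (ZMod.intCast_eq_intCast_iff_dvd_sub _ _ _).mp hsP.symm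
  have hkR : (s : ℝ) * P - r = M * k := by exact_mod_cast hk
  have hdecomp : c * s - k - y = ((r - M * y) + s * (c * M - P)) / M := by
    rw [eq_div_iff hM'.ne']
    linear_combination hkR
  have hfloor : |(r : ℝ) - M * y| ≤ 1 :=
    abs_le.mpr ⟨by linarith [Int.lt_floor_add_one (M * y)], by linarith [Int.floor_le (M * y)]⟩
  have hdrift : |s * (c * M - P)| ≤ 1 :=
    calc |s * (c * M - P)| = s * |c * M - P| := by rw [abs_mul, Nat.abs_cast]
      _ ≤ M * (1 / M) := by gcongr
      _ = 1 := mul_one_div_cancel hM'.ne'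
  refine ⟨s, hsM, k, ?_⟩
  rw [hdecomp, abs_div, Nat.abs_cast]
  gcongr
  linarith [abs_add_le (r - M * y) (s * (c * M - P))]

lemma exists_coprime_abs_sub_le {c : ℝ} {N M P L : ℕ} (hN : N ≠ 0) (hM : 0 < M)
    (hMN : M.Coprime N) (hL : ∀ p ∈ N.primeFactors, L ≤ p) (hcard : #N.primeFactors < L)
    (hPM : P.Coprime M) (hc : |c * M - P| ≤ 1 / M) {x : ℝ} (hx : 0 ≤ x) (y : ℝ) :
    ∃ a : ℕ, a.Coprime N ∧ |a - x| ≤ L * M ∧ ∃ k : ℤ, |c * a - k - y| ≤ (L + 1) / M := by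
  obtain ⟨s, hsM, k, hk⟩ := exists_lt_abs_mul_sub_sub_le hM hPM hc (y - c * ⌊x⌋₊)
  obtain ⟨t, htL, ht⟩ := exists_coprime_add_mul hN hMN hL hcard (⌊x⌋₊ + s)
  have hM' : (1 : ℝ) ≤ M := by exact_mod_cast hM
  have htL' : (t : ℝ) + 1 ≤ L := by exact_mod_cast htL
  refine ⟨⌊x⌋₊ + s + t * M, ht, ?_, k + t * P, ?_⟩ <;> push_cast
  · have hsM' : (s : ℝ) ≤ M := by exact_mod_cast hsM.le
    have hLM : (t + 1) * (M : ℝ) ≤ L * M := by gcongr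
    have htM : 0 ≤ (t : ℝ) * M := by positivity
    rw [abs_le]
    constructor <;>
      linarith [Nat.floor_le hx, Nat.lt_floor_add_one x, (s.cast_nonneg : (0 : ℝ) ≤ s)]
  · calc |c * (⌊x⌋₊ + s + t * M) - (k + t * P) - y|
        = |(c * s - k - (y - c * ⌊x⌋₊)) + t * (c * M - P)| := by ring_nf
      _ ≤ |c * s - k - (y - c * ⌊x⌋₊)| + t * |c * M - P| := by
          grw [abs_add_le, abs_mul, Nat.abs_cast]
      _ ≤ 2 / M + t * (1 / M) := by gcongr
      _ = (t + 1 + 1) / M := by ring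
      _ ≤ (L + 1) / M := by gcongr

lemma fib_add_mul_fib_succ_sub (i d : ℕ) :
    (Nat.fib (i + d) : ℤ) * Nat.fib (i + 1) - Nat.fib i * Nat.fib (i + d + 1)
      = (-1) ^ i * Nat.fib d := by
  induction i with
  | zero => simp
  | succ i ih =>
    have h₁ : (Nat.fib (i + 1 + 1) : ℤ) = Nat.fib i + Nat.fib (i + 1) := by
      exact_mod_cast Nat.fib_add_two
    have h₂ : (Nat.fib (i + d + 1 + 1) : ℤ) = Nat.fib (i + d) + Nat.fib (i + d + 1) := by
      exact_mod_cast Nat.fib_add_two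
    rw [add_right_comm i 1 d, h₁, h₂, pow_succ]
    linarith

lemma exists_le_succ_dvd_fib {p : ℕ} (hp : p.Prime) : ∃ k, 0 < k ∧ k ≤ p + 1 ∧ p ∣ Nat.fib k := by
  have := Fact.mk hp
  by_contra! hcon
  simp only [← ZMod.natCast_eq_zero_iff] at hcon
  -- The `p + 1` ratios `F_i / F_{i+1}` modulo `p` cannot be distinct.
  obtain ⟨i, j, hne, hij⟩ := Fintype.exists_ne_map_eq_of_card_lt
    (fun i : Fin (p + 1) => (Nat.fib i : ZMod p) / Nat.fib (i + 1)) (by simp [ZMod.card])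
  wlog hlt : i < j generalizing i j
  · exact this j i hne.symm hij.symm (lt_of_le_of_ne (not_lt.mp hlt) hne.symm)
  obtain ⟨d, hd⟩ := Nat.exists_eq_add_of_lt hlt
  rw [div_eq_div_iff (hcon _ (by lia) (by lia)) (hcon _ (by lia) (by lia)), hd] at hij
  have hdet := congrArg (Int.cast : ℤ → ZMod p) (fib_add_mul_fib_succ_sub i (d + 1))
  push_cast at hdet
  rw [← add_assoc, ← hij, sub_self, eq_comm] at hdet
  exact hcon (d + 1) (by lia) (by lia) (by simpa using hdet)

lemma le_succ_of_prime_dvd_fib_prime {p q : ℕ} (hp : p.Prime) (hq : q.Prime)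
    (h : p ∣ Nat.fib q) : q ≤ p + 1 := by
  obtain ⟨k, hk₀, hk, hpk⟩ := exists_le_succ_dvd_fib hp
  have hgcd : p ∣ Nat.fib (k.gcd q) := Nat.fib_gcd k q ▸ Nat.dvd_gcd hpk h
  rcases hq.eq_one_or_self_of_dvd _ (k.gcd_dvd_right q) with h₁ | hkq
  · rw [h₁, Nat.fib_one, Nat.dvd_one] at hgcd
    exact absurd hgcd hp.ne_one
  · exact (Nat.le_of_dvd hk₀ (Nat.gcd_eq_right_iff_dvd.mp hkq)).trans hk

lemma fib_add_two_lt_two_pow (n : ℕ) : Nat.fib (n + 2) < 2 ^ (n + 1) := by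
  induction n with
  | zero => simp
  | succ n ih =>
    have hstep : Nat.fib (n + 3) = Nat.fib (n + 1) + Nat.fib (n + 2) := Nat.fib_add_two
    have hmono : Nat.fib (n + 1) ≤ Nat.fib (n + 2) := Nat.fib_le_fib_succ
    rw [pow_succ]
    lia

lemma card_primeFactors_fib_add_two_le (n : ℕ) : #(Nat.fib (n + 2)).primeFactors ≤ n := by
  have hpos : Nat.fib (n + 2) ≠ 0 := by simp
  exact Nat.lt_succ_iff.mp <| (Nat.pow_lt_pow_iff_right one_lt_two).mp <|
    (two_pow_card_primeFactors_le hpos).trans_lt (fib_add_two_lt_two_pow n)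

lemma goldenRatio_pow_le_three_mul_fib {n : ℕ} (hn : n ≠ 0) : goldenRatio ^ n ≤ 3 * Nat.fib n := by
  obtain ⟨n, rfl⟩ := Nat.exists_eq_add_one_of_ne_zero hn
  have hstep : (Nat.fib (n + 2) : ℝ) = Nat.fib n + Nat.fib (n + 1) := by
    exact_mod_cast Nat.fib_add_two
  have hmono : (Nat.fib n : ℝ) ≤ Nat.fib (n + 1) := by exact_mod_cast Nat.fib_le_fib_succ
  have hconj : -goldenConj * Nat.fib (n + 1) ≤ 1 * Nat.fib (n + 1) := by
    gcongr
    linarith [neg_one_lt_goldenConj]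
  linarith [fib_succ_sub_goldenConj_mul_fib (n + 1)]

lemma isLittleO_pow_fib (k : ℕ) :
    (fun n : ℕ => (n : ℝ) ^ k) =o[atTop] fun n => (Nat.fib n : ℝ) := by
  refine (isLittleO_pow_const_const_pow_of_one_lt k one_lt_goldenRatio).trans_isBigO
    (.of_bound 3 ?_)
  filter_upwards [eventually_ne_atTop 0] with n hn
  rw [norm_of_nonneg (by positivity), norm_of_nonneg (by positivity)]
  exact goldenRatio_pow_le_three_mul_fib hn

lemma fib_sq_le_fib_two_mul_add_one (m : ℕ) : Nat.fib m ^ 2 ≤ Nat.fib (2 * m + 1) := by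
  rw [Nat.fib_two_mul_add_one]
  exact Nat.le_add_left _ _

lemma coprime_fib_fib_two_mul_add_one (m : ℕ) :
    (Nat.fib m).Coprime (Nat.fib (2 * m + 1)) := by
  rw [Nat.Coprime, ← Nat.fib_gcd]
  simp

lemma abs_fib_div_mul_fib_sub_le (m : ℕ) :
    |(Nat.fib (2 * m + 2) : ℝ) / Nat.fib (2 * m + 3) * Nat.fib (m + 1) - Nat.fib m|
      ≤ 1 / Nat.fib (m + 1) := by
  have hM : (0 : ℝ) < Nat.fib (m + 1) := by simp
  have hN : (0 : ℝ) < Nat.fib (2 * m + 3) := by simp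
  have hdet := congrArg (Int.cast : ℤ → ℝ) (fib_add_mul_fib_succ_sub m (m + 2))
  rw [show m + (m + 2) = 2 * m + 2 by ring] at hdet
  push_cast at hdet
  have hsum : (Nat.fib (2 * m + 3) : ℝ) = Nat.fib (m + 2) ^ 2 + Nat.fib (m + 1) ^ 2 := by
    exact_mod_cast Nat.fib_two_mul_add_one (m + 1)
  calc |(Nat.fib (2 * m + 2) : ℝ) / Nat.fib (2 * m + 3) * Nat.fib (m + 1) - Nat.fib m|
      = |(-1 : ℝ) ^ m * Nat.fib (m + 2) / Nat.fib (2 * m + 3)| := by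
        rw [← hdet]
        field_simp
    _ = Nat.fib (m + 2) / Nat.fib (2 * m + 3) := by simp [abs_div, abs_mul]
    _ ≤ 1 / Nat.fib (m + 1) := by
        rw [div_le_div_iff₀ hN hM, hsum]
        nlinarith [sq_nonneg ((Nat.fib (m + 2) : ℝ) - Nat.fib (m + 1))]

lemma exists_coprime_fib_approx {m : ℕ} (hq : (2 * m + 3).Prime) {x : ℝ} (hx : 0 ≤ x) (y : ℝ) :
    ∃ a : ℕ, a.Coprime (Nat.fib (2 * m + 3)) ∧
      |a / Nat.fib (2 * m + 3) - x| ≤ (2 * m + 3) / Nat.fib (m + 1) ∧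
      ∃ k : ℤ, |Nat.fib (2 * m + 2) * a / Nat.fib (2 * m + 3) - k - y|
        ≤ (2 * m + 3) / Nat.fib (m + 1) := by
  have hM : (0 : ℝ) < Nat.fib (m + 1) := by simp
  have hN : (0 : ℝ) < Nat.fib (2 * m + 3) := by simp
  have hMN : (Nat.fib (m + 1) : ℝ) ^ 2 ≤ Nat.fib (2 * m + 3) := by
    exact_mod_cast fib_sq_le_fib_two_mul_add_one (m + 1)
  have hlarge : ∀ p ∈ (Nat.fib (2 * m + 3)).primeFactors, 2 * m + 2 ≤ p := fun p hp => by
    have := le_succ_of_prime_dvd_fib_prime (Nat.prime_of_mem_primeFactors hp) hq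
      (Nat.dvd_of_mem_primeFactors hp)
    lia
  obtain ⟨a, ha, hax, k, hk⟩ := exists_coprime_abs_sub_le (by simp) (by simp)
    (coprime_fib_fib_two_mul_add_one (m + 1)) hlarge
    (Nat.lt_succ_of_le (card_primeFactors_fib_add_two_le (2 * m + 1)))
    (Nat.fib_coprime_fib_succ m) (abs_fib_div_mul_fib_sub_le m)
    (by positivity : 0 ≤ x * Nat.fib (2 * m + 3)) y
  push_cast at hax hk
  refine ⟨a, ha, ?_, k, ?_⟩
  · calc |(a : ℝ) / Nat.fib (2 * m + 3) - x|
        = |a - x * Nat.fib (2 * m + 3)| / Nat.fib (2 * m + 3) := by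
          rw [← abs_of_pos hN, ← abs_div, abs_of_pos hN, sub_div, mul_div_cancel_right₀ _ hN.ne']
      _ ≤ (2 * m + 2) * Nat.fib (m + 1) / Nat.fib (m + 1) ^ 2 := by gcongr
      _ = (2 * m + 2) / Nat.fib (m + 1) := by field_simp
      _ ≤ (2 * m + 3) / Nat.fib (m + 1) := by gcongr; norm_num
  · rw [mul_div_right_comm]
    exact hk.trans_eq (by ring)

lemma frequently_exists_coprime_fib_approx {x ε : ℝ} (hx : 0 ≤ x) (y : ℝ) (hε : 0 < ε) :
    ∃ᶠ n in atTop, ∃ a : ℕ, a.Coprime (Nat.fib n) ∧ |a / Nat.fib n - x| < ε ∧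
      ∃ k : ℤ, |Nat.fib (n - 1) * a / Nat.fib n - k - y| < ε := by
  obtain ⟨K, hK⟩ := eventually_atTop.mp ((isLittleO_pow_fib 1).def (by positivity : 0 < ε / 4))
  refine frequently_atTop.mpr fun n₀ => ?_
  obtain ⟨q, hqge, hq⟩ := Nat.exists_infinite_primes (2 * K + n₀ + 3)
  obtain ⟨m, rfl⟩ : ∃ m, q = 2 * m + 3 := by
    obtain ⟨m, hm⟩ := hq.odd_of_ne_two (by lia)
    exact ⟨m - 1, by lia⟩
  have hsmall : (2 * m + 3) / Nat.fib (m + 1) < ε := by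
    have := hK (m + 1) (by lia)
    rw [pow_one, norm_natCast, norm_natCast] at this
    push_cast at this
    rw [div_lt_iff₀ (by simp)]
    linarith [(Nat.cast_nonneg m : (0 : ℝ) ≤ m)]
  obtain ⟨a, ha, hax, k, hk⟩ := exists_coprime_fib_approx hq hx y
  exact ⟨2 * m + 3, by lia, a, ha, hax.trans_lt hsmall, k, hk.trans_lt hsmall⟩

/-- The Fibonacci lattice point set of order `n` in the unit square, restricted to the numerators
coprime to `F_n`. -/
def primitiveFibLattice (n : ℕ) : Set (I × I) :=
  {z | ∃ a : ℕ, 1 ≤ a ∧ a < Nat.fib n ∧ Nat.gcd a (Nat.fib n) = 1 ∧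
    (z.1 : ℝ) = a / Nat.fib n ∧ (z.2 : ℝ) = Int.fract (Nat.fib (n - 1) * a / Nat.fib n : ℝ)}

lemma exists_mem_primitiveFibLattice {n a : ℕ} (ha : 1 ≤ a) (han : a < Nat.fib n)
    (hcop : a.Coprime (Nat.fib n)) :
    ∃ w ∈ primitiveFibLattice n, (w.1 : ℝ) = a / Nat.fib n ∧
      (w.2 : ℝ) = Int.fract (Nat.fib (n - 1) * a / Nat.fib n : ℝ) :=
  ⟨(⟨a / Nat.fib n, unitInterval.div_mem (by positivity) (by positivity) (mod_cast han.le)⟩,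
    ⟨_, unitInterval.fract_mem _⟩), ⟨a, ha, han, hcop, rfl, rfl⟩, rfl, rfl⟩

lemma exists_abs_sub_le_mem_Icc {x ε : ℝ} (hx : x ∈ I) (hε : 0 ≤ ε) (hε' : ε ≤ 1 / 2) :
    ∃ x' ∈ Set.Icc ε (1 - ε), |x' - x| ≤ ε := by
  refine ⟨(1 - 2 * ε) * x + ε, ⟨?_, ?_⟩, abs_le.mpr ⟨?_, ?_⟩⟩ <;> nlinarith [hx.1, hx.2]

lemma frequently_mem_thickening_primitiveFibLattice (z : I × I) {ε : ℝ} (hε : 0 < ε) :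
    ∃ᶠ n in atTop, z ∈ thickening ε (primitiveFibLattice n) := by
  obtain ⟨η, hη, hη'⟩ : ∃ η, 0 < η ∧ η ≤ 1 / 2 ∧ 2 * η ≤ ε :=
    ⟨min (1 / 2) (ε / 2), by positivity, min_le_left _ _,
      by linarith [min_le_right (1 / 2) (ε / 2)]⟩
  -- Moving `z` inside the square keeps the approximants off its boundary, where `fract` jumps.
  obtain ⟨x, hx, hxz⟩ := exists_abs_sub_le_mem_Icc z.1.2 hη.le hη'.1
  obtain ⟨y, hy, hyz⟩ := exists_abs_sub_le_mem_Icc z.2.2 hη.le hη'.1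
  refine (frequently_exists_coprime_fib_approx (hη.le.trans hx.1) y hη).mono ?_
  rintro n ⟨a, hcop, hax, k, hk⟩
  have hax' := abs_lt.mp hax
  have hk' := abs_lt.mp hk
  have hpos : (0 : ℝ) < a / Nat.fib n := by linarith [hx.1]
  have hlt : (a : ℝ) / Nat.fib n < 1 := by linarith [hx.2]
  obtain ⟨ha, hn⟩ : a ≠ 0 ∧ Nat.fib n ≠ 0 := by
    constructor <;> intro h <;> simp [h] at hpos
  have han : a < Nat.fib n := by
    rw [div_lt_one (by positivity)] at hlt
    exact_mod_cast hlt
  have hfract : Int.fract (Nat.fib (n - 1) * a / Nat.fib n : ℝ)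
      = Nat.fib (n - 1) * a / Nat.fib n - k :=
    Int.fract_eq_iff.mpr ⟨by linarith [hy.1], by linarith [hy.2], k, by ring⟩
  obtain ⟨w, hw, hw₁, hw₂⟩ :=
    exists_mem_primitiveFibLattice (Nat.one_le_iff_ne_zero.mpr ha) han hcop
  refine mem_thickening_iff.mpr ⟨w, hw, ?_⟩
  rw [dist_comm, Prod.dist_eq, max_lt_iff, Subtype.dist_eq, Subtype.dist_eq, dist_eq, dist_eq,
    hw₁, hw₂, hfract]
  constructor
  · linarith [abs_sub_le ((a : ℝ) / Nat.fib n) x z.1]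
  · linarith [abs_sub_le (Nat.fib (n - 1) * a / Nat.fib n - k : ℝ) y z.2]

lemma eventually_residual_frequently_mem_thickening {X : Type*} [PseudoMetricSpace X]
    {S : ℕ → Set X} (hS : ∀ x, ∀ ε > 0, ∃ᶠ n in atTop, x ∈ thickening ε (S n))
    {r : ℕ → ℝ} (hr : ∀ᶠ n in atTop, 0 < r n) :
    ∀ᶠ x in residual X, ∃ᶠ n in atTop, x ∈ thickening (r n) (S n) := by
  simp only [frequently_atTop, eventually_countable_forall]
  intro K
  have hopen : IsOpen {x | ∃ n, K ≤ n ∧ x ∈ thickening (r n) (S n)} := by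
    simp only [Set.ofPred_exists, Set.ofPred_and]
    exact isOpen_iUnion fun n => isOpen_const.inter isOpen_thickening
  refine residual_of_dense_open hopen (dense_iff.mpr fun x ε hε => ?_)
  obtain ⟨n, hn, hrn, hKn⟩ := ((hS x ε hε).and_eventually
    (hr.and (eventually_ge_atTop K))).exists
  obtain ⟨s, hs, hxs⟩ := mem_thickening_iff.mp hn
  exact ⟨s, mem_ball'.mpr hxs, n, hKn, self_subset_thickening hrn _ hs⟩

theorem stmt_8_general {r : ℕ → ℕ → ℝ} (hr : ∀ ν, ∀ᶠ n in atTop, 0 < r ν n) :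
    ∀ᶠ z in residual (I × I), ∃ n : ℕ → ℕ, StrictMono n ∧ (∀ ν, 0 < n ν) ∧
      ∃ a : ℕ → ℕ, ∀ ν : ℕ,
        1 ≤ a ν ∧ a ν < Nat.fib (n ν) ∧ Nat.gcd (a ν) (Nat.fib (n ν)) = 1 ∧
        |(z.1 : ℝ) - (a ν : ℝ) / (Nat.fib (n ν) : ℝ)| ≤ r ν (n ν) ∧
        |(z.2 : ℝ) - Int.fract ((Nat.fib (n ν - 1) : ℝ) * (a ν : ℝ) / (Nat.fib (n ν) : ℝ))| ≤
          r ν (n ν) := by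
  have hres := eventually_countable_forall.mpr fun ν =>
    eventually_residual_frequently_mem_thickening
      (fun z _ => frequently_mem_thickening_primitiveFibLattice z) (hr ν)
  filter_upwards [hres] with z hz
  obtain ⟨n, hmono, hn⟩ := extraction_forall_of_frequently hz
  simp only [mem_thickening_iff, Prod.dist_eq, max_lt_iff, Subtype.dist_eq, dist_eq] at hn
  choose w hw hdist₁ hdist₂ using hn
  choose a ha han hcop hw₁ hw₂ using hw
  refine ⟨n, hmono, fun ν => Nat.fib_pos.mp (by have := han ν; lia), a, fun ν =>
    ⟨ha ν, han ν, hcop ν, ?_, ?_⟩⟩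
  · exact hw₁ ν ▸ (hdist₁ ν).le
  · exact hw₂ ν ▸ (hdist₂ ν).le

/-- Given any sequence of positive reals `δ_ν → 0`, there exist `α, β ∈ [0,1]`, a strictly
increasing sequence of positive integers `n_ν` and integers `a_ν` with `1 ≤ a_ν < F_{n_ν}`,
`gcd(a_ν, F_{n_ν}) = 1`, such that `|α − a_ν/F_{n_ν}| ≤ δ_ν/F_{n_ν}²` and
`|β − {F_{n_ν−1} a_ν / F_{n_ν}}| ≤ δ_ν/F_{n_ν}²` for all `ν`. -/
theorem stmt_8 (δ : ℕ → ℝ) (hδpos : ∀ ν, 0 < δ ν)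
    (hδ : Filter.Tendsto δ Filter.atTop (nhds 0)) :
    ∃ α β : ℝ, α ∈ Set.Icc (0 : ℝ) 1 ∧ β ∈ Set.Icc (0 : ℝ) 1 ∧
      ∃ n : ℕ → ℕ, StrictMono n ∧ (∀ ν, 0 < n ν) ∧
        ∃ a : ℕ → ℕ, ∀ ν : ℕ,
          1 ≤ a ν ∧ a ν < Nat.fib (n ν) ∧ Nat.gcd (a ν) (Nat.fib (n ν)) = 1 ∧
          |α - (a ν : ℝ) / (Nat.fib (n ν) : ℝ)| ≤ δ ν / (Nat.fib (n ν) : ℝ) ^ 2 ∧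
          |β - Int.fract ((Nat.fib (n ν - 1) : ℝ) * (a ν : ℝ) / (Nat.fib (n ν) : ℝ))| ≤
            δ ν / (Nat.fib (n ν) : ℝ) ^ 2 := by
  have hrate : ∀ ν, ∀ᶠ n in atTop, 0 < δ ν / (Nat.fib n : ℝ) ^ 2 := fun ν =>
    (eventually_gt_atTop 0).mono fun n hn =>
      div_pos (hδpos ν) (pow_pos (mod_cast Nat.fib_pos.mpr hn) 2)
  obtain ⟨⟨α, β⟩, h⟩ := (dense_of_mem_residual (stmt_8_general hrate)).nonempty
  exact ⟨α, β, α.2, β.2, h⟩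
end

section
/- Let α, β be real numbers for which there exist a sequence of positive reals δ_ν → 0, a strictly increasing sequence of positive integers (n_ν), and integers (a_ν) with 1 ≤ a_ν < F_{n_ν}, gcd(a_ν, F_{n_ν}) = 1, such that |α − a_ν/F_{n_ν}| ≤ δ_ν/F_{n_ν}² and |β − {F_{n_ν−1}·a_ν/F_{n_ν}}| ≤ δ_ν/F_{n_ν}² for all ν. Then for every ε > 0 there exists V such that for all ν ≥ V, min_{x ∈ ℤ, 1 ≤ x < F_{n_ν}} ‖αx‖ · ‖βx‖ ≥ 1/( F_{n_ν} · ((3+√5)/2 + ε) ). -/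
open Filter Topology
open Nat (fib)
open Real (goldenRatio)

/-!
For `q = F_{N+2}` let `Λ` be the lattice of integer points `(u, w)` with `w ≡ F_{N+1} u (mod q)`.
If `α` and `β` are close to `a / q` and `b / q` with `b ≡ F_{N+1} a (mod q)`, then `q ‖αx‖` and
`q ‖βx‖` are close to `|u|` and `|w|` for a point `(u, w)` of `Λ` off the axes. Consecutive pairs
of Fibonacci numbers give bases `(F_k, ± F_{j+1})`, `(F_{k+1}, ∓ F_j)` of `Λ`, where
`k + j = N + 1`, so `0 < |u| < F_{k+1}` forces `|w| ≥ F_{j+1}`; taking `F_k ≤ |u| < F_{k+1}` yields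
`|u| |w| ≥ F_k F_{j+1} ≥ F_N`. Finally `F_N / F_{N+2} → φ⁻²`, and `φ² = (3 + √5) / 2`.
-/

theorem exists_fib_coordinates (s t : ℤ) (k j : ℕ) :
    ∃ x y : ℤ, x * fib k + y * fib (k + 1) = t ∧
      |x * fib (j + 1) - y * fib j| = |s * fib (k + j + 1) - t * fib (k + j)| := by
  induction k generalizing j with
  | zero => exact ⟨s, t, by simp⟩
  | succ k ih =>
    obtain ⟨x, y, ht, hw⟩ := ih (j + 1)
    refine ⟨y - x, x, ?_, ?_⟩
    · rw [← ht, Nat.fib_add_two]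
      push_cast
      ring
    · rw [show k + 1 + j = k + (j + 1) by omega, ← hw, ← abs_neg, Nat.fib_add_two]
      congr 1
      push_cast
      ring

/-- The Fibonacci case of the law of best approximation: in the coordinates `x, y` of
`exists_fib_coordinates`, `|t| < F_{k+1}` forces `x ≠ 0` and `x`, `y` of opposite signs. -/
theorem fib_succ_le_abs_sub_of_abs_lt {s t : ℤ} {k j : ℕ} (ht₀ : t ≠ 0)
    (ht : |t| < fib (k + 1)) :
    (fib (j + 1) : ℤ) ≤ |s * fib (k + j + 1) - t * fib (k + j)| := by
  obtain ⟨x, y, hxy, hw⟩ := exists_fib_coordinates s t k j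
  rw [← hw]
  obtain ⟨ht_lower, ht_upper⟩ := abs_lt.1 ht
  have hk : (0 : ℤ) ≤ fib k := by positivity
  have hk_succ : (0 : ℤ) ≤ fib (k + 1) := by positivity
  have hj : (0 : ℤ) ≤ fib j := by positivity
  have hj_succ : (0 : ℤ) ≤ fib (j + 1) := by positivity
  rcases lt_trichotomy x 0 with hx | rfl | hx
  · have hy : 0 ≤ y := by
      by_contra! hy
      nlinarith only [hxy, ht_lower, hx, hy, hk, hk_succ]
    calc (fib (j + 1) : ℤ) ≤ -(x * fib (j + 1) - y * fib j) := by
          nlinarith only [hx, hy, hj, hj_succ]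
      _ ≤ |x * fib (j + 1) - y * fib j| := neg_le_abs _
  · have hdvd : (fib (k + 1) : ℤ) ∣ t := ⟨y, by rw [← hxy]; ring⟩
    exact absurd (Int.eq_zero_of_abs_lt_dvd hdvd ht) ht₀
  · have hy : y ≤ 0 := by
      by_contra! hy
      nlinarith only [hxy, ht_upper, hx, hy, hk, hk_succ]
    calc (fib (j + 1) : ℤ) ≤ x * fib (j + 1) - y * fib j := by
          nlinarith only [hx, hy, hj, hj_succ]
      _ ≤ |x * fib (j + 1) - y * fib j| := le_abs_self _

theorem fib_add_succ_le_fib_add_two_mul_fib_succ (i j : ℕ) :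
    fib (i + j + 1) ≤ fib (i + 2) * fib (j + 1) := by
  rw [Nat.fib_add, Nat.fib_add_two, add_mul]
  gcongr
  exact Nat.le_succ j

theorem fib_le_abs_mul_abs_of_modEq {N : ℕ} {u w : ℤ}
    (h : w ≡ fib (N + 1) * u [ZMOD fib (N + 2)]) (hu : u ≠ 0) (hw : w ≠ 0) :
    (fib N : ℤ) ≤ |u| * |w| := by
  obtain ⟨k, hk_le, hk_lt⟩ : ∃ k, (fib k : ℤ) ≤ |u| ∧ |u| < fib (k + 1) := by
    rw [Int.abs_eq_natAbs]
    exact ⟨u.natAbs.greatestFib, mod_cast u.natAbs.fib_greatestFib_le,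
      mod_cast u.natAbs.lt_fib_greatestFib_add_one⟩
  rcases le_or_gt N k with hNk | hkN
  · calc (fib N : ℤ) ≤ fib k := mod_cast Nat.fib_mono hNk
      _ ≤ |u| := hk_le
      _ ≤ |u| * |w| := le_mul_of_one_le_right (abs_nonneg u) (Int.one_le_abs hw)
  · obtain ⟨i, rfl⟩ : ∃ i, k = i + 2 := by
      refine Nat.exists_eq_add_of_le' ?_
      by_contra! hk
      have : fib (k + 1) ≤ 1 := Nat.fib_mono (show k + 1 ≤ 2 by omega)
      have := Int.one_le_abs hu
      omega
    obtain ⟨j, rfl⟩ : ∃ j, N = i + j + 1 := ⟨N - (i + 1), by omega⟩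
    obtain ⟨s, hs⟩ := h.dvd
    have hw_eq : |w| = |s * fib (i + 2 + j + 1) - u * fib (i + 2 + j)| := by
      rw [← abs_neg, show i + 2 + j = i + j + 1 + 1 by omega]
      congr 1
      linarith
    calc (fib (i + j + 1) : ℤ) ≤ fib (i + 2) * fib (j + 1) :=
          mod_cast fib_add_succ_le_fib_add_two_mul_fib_succ i j
      _ ≤ |u| * |w| := by
          rw [hw_eq]
          gcongr
          exact fib_succ_le_abs_sub_of_abs_lt hu hk_lt

theorem one_sub_mul_abs_div_le_abs_mul_sub {θ d : ℝ} {c p x : ℤ} {q : ℕ} (hq : 0 < q)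
    (hθ : |θ - c / q| ≤ d / q ^ 2) (hx : |x| ≤ q) (hne : c * x - p * q ≠ 0) :
    (1 - d) * (|c * x - p * q| / q) ≤ |θ * x - p| := by
  have hq' : (0 : ℝ) < q := mod_cast hq
  have hx' : |(x : ℝ)| ≤ q := mod_cast hx
  have hone : (1 : ℝ) ≤ |c * x - p * q| := mod_cast Int.one_le_abs hne
  have hd : 0 ≤ d := by
    have := (abs_nonneg _).trans hθ
    rwa [le_div_iff₀ (by positivity), zero_mul] at this
  have herror : |(θ - c / q) * x| ≤ d * (|c * x - p * q| / q) := calc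
    |(θ - c / q) * x| ≤ d / q ^ 2 * q := by rw [abs_mul]; gcongr
    _ = d * (1 / q) := by field_simp
    _ ≤ d * (|c * x - p * q| / q) := by gcongr
  have hsplit : (|c * x - p * q| / q : ℝ) = |θ * x - p - (θ - c / q) * x| := by
    push_cast
    rw [← abs_of_pos hq', ← abs_div, abs_of_pos hq']
    congr 1
    field_simp
    ring
  have htriangle := abs_sub (θ * x - p) ((θ - c / q) * x)
  linarith

theorem one_sub_sq_mul_fib_div_sq_le_distNearestInt_mul {N : ℕ} {a b x : ℤ} {α β d : ℝ}
    (hd : d ≤ 1) (ha : IsCoprime a (fib (N + 2) : ℤ))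
    (hb : b ≡ fib (N + 1) * a [ZMOD fib (N + 2)])
    (hα : |α - a / fib (N + 2)| ≤ d / fib (N + 2) ^ 2)
    (hβ : |β - b / fib (N + 2)| ≤ d / fib (N + 2) ^ 2)
    (hx₀ : x ≠ 0) (hx : |x| < fib (N + 2)) :
    (1 - d) ^ 2 * (fib N / fib (N + 2) ^ 2) ≤
      distNearestInt (α * x) * distNearestInt (β * x) := by
  set q := fib (N + 2)
  set u := a * x - round (α * x) * q with hu
  set w := b * x - round (β * x) * q with hw
  have hq : 0 < q := Nat.fib_pos.2 (by omega)
  obtain ⟨f, hf⟩ := hb.dvd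
  have hb_coprime : IsCoprime b q := by
    have hfib : IsCoprime (fib (N + 1) : ℤ) q :=
      Nat.isCoprime_iff_coprime.2 (Nat.fib_coprime_fib_succ (N + 1))
    rw [show b = fib (N + 1) * a + q * -f by linarith]
    exact (hfib.mul_left ha).add_mul_left_left (-f)
  have hne {c : ℤ} (hc : IsCoprime c q) (p : ℤ) : c * x - p * q ≠ 0 := fun h =>
    hx₀ (Int.eq_zero_of_abs_lt_dvd (hc.symm.dvd_of_dvd_mul_left ⟨p, by linarith⟩) hx)
  have huw : w ≡ fib (N + 1) * u [ZMOD q] :=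
    Int.modEq_iff_dvd.2 ⟨f * x - fib (N + 1) * round (α * x) + round (β * x), by
      rw [hu, hw]; linear_combination x * hf⟩
  have hfib : (fib N : ℝ) ≤ |u| * |w| :=
    mod_cast fib_le_abs_mul_abs_of_modEq huw (hne ha _) (hne hb_coprime _)
  have : 0 ≤ 1 - d := sub_nonneg.2 hd
  calc (1 - d) ^ 2 * (fib N / q ^ 2 : ℝ)
      ≤ (1 - d) ^ 2 * (|u| * |w| / q ^ 2) := by gcongr
    _ = (1 - d) * (|u| / q) * ((1 - d) * (|w| / q)) := by ring
    _ ≤ distNearestInt (α * x) * distNearestInt (β * x) :=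
      mul_le_mul (one_sub_mul_abs_div_le_abs_mul_sub hq hα hx.le (hne ha _))
        (one_sub_mul_abs_div_le_abs_mul_sub hq hβ hx.le (hne hb_coprime _))
        (by positivity) (abs_nonneg _)

theorem tendsto_fib_div_fib_add_two_atTop_s9 :
    Tendsto (fun N : ℕ => (fib N / fib (N + 2) : ℝ)) atTop (𝓝 (goldenRatio ^ 2)⁻¹) := by
  have hratio := tendsto_fib_succ_div_fib_atTop
  have hprod := (hratio.mul (hratio.comp (tendsto_add_atTop_nat 1))).inv₀ (by positivity)
  rw [← sq] at hprod
  refine hprod.congr fun N => ?_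
  have : (fib (N + 1) : ℝ) ≠ 0 := mod_cast (Nat.fib_pos.2 N.succ_pos).ne'
  simp only [Function.comp_apply, add_assoc, Nat.reduceAdd]
  rw [mul_comm, div_mul_div_cancel₀ this, inv_div]

theorem stmt_9_general {ι : Type*} {l : Filter ι} {α β : ℝ} {δ : ι → ℝ} {n : ι → ℕ} {a b : ι → ℤ}
    (hδ : Tendsto δ l (𝓝 0)) (hn : Tendsto n l atTop)
    (ha : ∀ᶠ ν in l, IsCoprime (a ν) (fib (n ν) : ℤ))
    (hb : ∀ᶠ ν in l, b ν ≡ fib (n ν - 1) * a ν [ZMOD fib (n ν)])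
    (hα : ∀ᶠ ν in l, |α - a ν / fib (n ν)| ≤ δ ν / fib (n ν) ^ 2)
    (hβ : ∀ᶠ ν in l, |β - b ν / fib (n ν)| ≤ δ ν / fib (n ν) ^ 2) {ε : ℝ} (hε : 0 < ε) :
    ∀ᶠ ν in l, ∀ x : ℤ, x ≠ 0 → |x| < fib (n ν) →
      1 / (fib (n ν) * ((3 + √5) / 2 + ε)) ≤ distNearestInt (α * x) * distNearestInt (β * x) := by
  have hφ : (3 + √5) / 2 = goldenRatio ^ 2 := by
    rw [Real.goldenRatio_sq, goldenRatio]
    ring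
  have hlim : Tendsto (fun ν => (1 - δ ν) ^ 2 * (fib (n ν - 2) / fib (n ν - 2 + 2) : ℝ)) l
      (𝓝 (goldenRatio ^ 2)⁻¹) := by
    simpa using ((hδ.const_sub 1).pow 2).mul
      (tendsto_fib_div_fib_add_two_atTop_s9.comp ((tendsto_sub_atTop_nat 2).comp hn))
  have hlt : (goldenRatio ^ 2 + ε)⁻¹ < (goldenRatio ^ 2)⁻¹ :=
    inv_strictAnti₀ (by positivity) (by linarith)
  filter_upwards [ha, hb, hα, hβ, hlim.eventually_const_le hlt, hδ.eventually_le_const one_pos,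
    hn.eventually_ge_atTop 2] with ν ha hb hα hβ hν hδ hn x hx₀ hx
  obtain ⟨N, hN⟩ := Nat.exists_eq_add_of_le' hn
  simp only [hN, Nat.add_sub_cancel, Nat.add_succ_sub_one] at *
  calc 1 / (fib (N + 2) * ((3 + √5) / 2 + ε)) = (goldenRatio ^ 2 + ε)⁻¹ / fib (N + 2) := by
        rw [hφ]; field_simp
    _ ≤ (1 - δ ν) ^ 2 * (fib N / fib (N + 2)) / fib (N + 2) := by gcongr
    _ = (1 - δ ν) ^ 2 * (fib N / fib (N + 2) ^ 2) := by ring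
    _ ≤ _ := one_sub_sq_mul_fib_div_sq_le_distNearestInt_mul hδ ha hb hα hβ hx₀ hx

/-- If `α, β` admit the special approximations by `a_ν/F_{n_ν}` and
`{F_{n_ν−1} a_ν / F_{n_ν}}` with errors `δ_ν/F_{n_ν}²`, `δ_ν → 0`, then for every `ε > 0`
and all large `ν`, `min_{1 ≤ x < F_{n_ν}} ‖αx‖·‖βx‖ ≥ 1/(F_{n_ν} ((3+√5)/2 + ε))`. -/
theorem stmt_9 (α β : ℝ) (δ : ℕ → ℝ) (hδpos : ∀ ν, 0 < δ ν)
    (hδ : Filter.Tendsto δ Filter.atTop (nhds 0))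
    (n : ℕ → ℕ) (hn : StrictMono n) (hnpos : ∀ ν, 0 < n ν)
    (a : ℕ → ℕ) (ha : ∀ ν, 1 ≤ a ν ∧ a ν < Nat.fib (n ν))
    (hcop : ∀ ν, Nat.gcd (a ν) (Nat.fib (n ν)) = 1)
    (happrox : ∀ ν,
      |α - (a ν : ℝ) / (Nat.fib (n ν) : ℝ)| ≤ δ ν / (Nat.fib (n ν) : ℝ) ^ 2 ∧
      |β - Int.fract ((Nat.fib (n ν - 1) : ℝ) * (a ν : ℝ) / (Nat.fib (n ν) : ℝ))| ≤
        δ ν / (Nat.fib (n ν) : ℝ) ^ 2) :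
    ∀ ε : ℝ, 0 < ε → ∃ V : ℕ, ∀ ν : ℕ, V ≤ ν →
      ∀ x : ℤ, 1 ≤ x → x < (Nat.fib (n ν) : ℤ) →
        distNearestInt (α * (x : ℝ)) * distNearestInt (β * (x : ℝ)) ≥
          1 / ((Nat.fib (n ν) : ℝ) * ((3 + Real.sqrt 5) / 2 + ε)) := by
  intro ε hε
  refine (eventually_atTop.1 (stmt_9_general (a := fun ν => a ν)
    (b := fun ν => (fib (n ν - 1) * a ν % fib (n ν) : ℕ)) hδ hn.tendsto_atTop
    (.of_forall fun ν => Nat.isCoprime_iff_coprime.2 (hcop ν))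
    (.of_forall fun ν => mod_cast Nat.mod_modEq _ _)
    (.of_forall fun ν => (happrox ν).1) (.of_forall fun ν => ?_) hε)).imp
    fun V hV ν hν x hx hxn => hV ν hν x (by omega) (by rwa [abs_of_pos (by omega)])
  simpa only [← Nat.cast_mul, Int.fract_div_natCast_eq_div_natCast_mod, Int.cast_natCast]
    using (happrox ν).2
end

section
/- For every σ > 0 there exists N such that for every integer n ≥ N there exists a positive integer k with |k − n/2| ≤ n^σ and gcd(k, n) = 1; consequently gcd(F_k, F_n) = F_{gcd(k,n)} = 1. -/
/-!
The integer `k = (n + d) / 2`, where `d` is `1`, `2` or `4` according to `n` modulo `4`, is coprime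
to `n`: a common divisor divides `2 * k - n = d`, and `k` is odd when `d` is even. As `k` is within
`2` of `n / 2`, it suffices that `n ^ σ ≥ 2`.
-/

open Filter

theorem exists_coprime_lt_two_mul_le_add_four (n : ℕ) :
    ∃ k : ℕ, n < 2 * k ∧ 2 * k ≤ n + 4 ∧ k.Coprime n := by
  have hmod : n % 2 = 1 ∨ n % 4 = 0 ∨ n % 4 = 2 := by omega
  obtain ⟨k, d, hsum, hpos, hle, hcop⟩ :
      ∃ k d : ℕ, n + d = 2 * k ∧ 0 < d ∧ d ≤ 4 ∧ k.Coprime d := by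
    rcases hmod with hodd | hzero | htwo
    · exact ⟨n / 2 + 1, 1, by omega, by decide, by decide, Nat.coprime_one_right _⟩
    · have hk : Odd (n / 2 + 1) := Nat.odd_iff.mpr (by omega)
      exact ⟨n / 2 + 1, 2, by omega, by decide, by decide, hk.coprime_two_right⟩
    · have hk : Odd (n / 2 + 2) := Nat.odd_iff.mpr (by omega)
      exact ⟨n / 2 + 2, 2 ^ 2, by omega, by decide, by decide, hk.coprime_two_right.pow_right 2⟩
  have hdiff : 2 * k - n = d := by omega
  have hgcd : k.gcd d = k.gcd n := hdiff ▸ Nat.gcd_mul_right_sub_right (by omega)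
  exact ⟨k, by omega, by omega, hgcd.symm.trans hcop⟩

theorem exists_pos_coprime_abs_sub_half_le_two (n : ℕ) :
    ∃ k : ℕ, 0 < k ∧ |(k : ℝ) - (n : ℝ) / 2| ≤ 2 ∧ k.Coprime n := by
  obtain ⟨k, hlt, hle, hcop⟩ := exists_coprime_lt_two_mul_le_add_four n
  have hlt' : (n : ℝ) < 2 * k := mod_cast hlt
  have hle' : 2 * (k : ℝ) ≤ n + 4 := mod_cast hle
  exact ⟨k, by omega, abs_le.mpr ⟨by linarith, by linarith⟩, hcop⟩

theorem tendsto_natCast_rpow_atTop {σ : ℝ} (hσ : 0 < σ) :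
    Tendsto (fun n : ℕ => (n : ℝ) ^ σ) atTop atTop :=
  (tendsto_rpow_atTop hσ).comp tendsto_natCast_atTop_atTop

/-- For every σ > 0 and all large `n` there is a positive integer `k` with
`|k − n/2| ≤ n^σ`, `gcd(k, n) = 1`; consequently `gcd(F_k, F_n) = F_{gcd(k,n)} = 1`. -/
theorem stmt_13 (σ : ℝ) (hσ : 0 < σ) :
    ∃ N : ℕ, ∀ n : ℕ, N ≤ n →
      ∃ k : ℕ, 0 < k ∧ |(k : ℝ) - (n : ℝ) / 2| ≤ (n : ℝ) ^ σ ∧ Nat.gcd k n = 1 ∧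
        Nat.gcd (Nat.fib k) (Nat.fib n) = Nat.fib (Nat.gcd k n) ∧
        Nat.fib (Nat.gcd k n) = 1 := by
  obtain ⟨N, hN⟩ := eventually_atTop.mp ((tendsto_natCast_rpow_atTop hσ).eventually_ge_atTop 2)
  refine ⟨N, fun n hn => ?_⟩
  obtain ⟨k, hpos, hdist, hcop⟩ := exists_pos_coprime_abs_sub_half_le_two n
  have hgcd : k.gcd n = 1 := hcop
  exact ⟨k, hpos, hdist.trans (hN n hn), hgcd, (Nat.fib_gcd k n).symm, hgcd ▸ Nat.fib_one⟩
end
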